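/- A function φ : 𝔻² → ℂ is analytic with sup_{λ∈𝔻²} |φ(λ)| ≤ 1 if and only if there exist complex Hilbert spaces H₁ and H₂ and a linear isometry V : ℂ ⊕ H → ℂ ⊕ H, where H := H₁ ⊕ H₂, with block decomposition V(c,h) = (Ac + Bh, cC + Dh) (A ∈ ℂ, B : H → ℂ bounded linear, C ∈ H, D : H → H bounded linear), such that, writing E_λ : H → H for the operator λ¹ I_{H₁} ⊕ λ² I_{H₂}, for every λ = (λ¹,λ²) ∈ 𝔻² the operator I_H − D E_λ is invertible and φ(λ) = A + B E_λ (I_H − D E_λ)^{-1} C. -/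

import Mathlib

open Complex Metric

/-- The open bidisk in `ℂ × ℂ`. -/
def Bidisk : Set (ℂ × ℂ) := {lam : ℂ × ℂ | ‖lam.1‖ < 1 ∧ ‖lam.2‖ < 1}

/-- The operator `E_λ = λ¹ I_{H₁} ⊕ λ² I_{H₂}` on the Hilbert-space direct sum
`H = H₁ ⊕ H₂` (realized as `WithLp 2 (H₁ × H₂)`). -/
noncomputable def diagBlockOp (H₁ H₂ : Type*) [NormedAddCommGroup H₁]
    [InnerProductSpace ℂ H₁] [NormedAddCommGroup H₂] [InnerProductSpace ℂ H₂]
    (a b : ℂ) : WithLp 2 (H₁ × H₂) →L[ℂ] WithLp 2 (H₁ × H₂) :=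
  ((WithLp.prodContinuousLinearEquiv 2 ℂ H₁ H₂).symm :
      H₁ × H₂ →L[ℂ] WithLp 2 (H₁ × H₂)).comp
    (((a • ContinuousLinearMap.id ℂ H₁).prodMap (b • ContinuousLinearMap.id ℂ H₂)).comp
      ((WithLp.prodContinuousLinearEquiv 2 ℂ H₁ H₂) :
        WithLp 2 (H₁ × H₂) →L[ℂ] H₁ × H₂))

/-!
Let `φ` be analytic and bounded by `1` on the bidisk. Multiplication by `z ↦ conj (φ (conj z))` is a
contraction `T` on `L²(𝕋²)` that commutes with the bilateral shifts `U₁, U₂`. It can be constructed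
without boundary values, as a weak limit of its power series at `(rU₁, rU₂)`: von Neumann's
inequality for commuting normal operators bounds these by `1`.

Write `T = J⋆ W`, where the isometries `J, W : L → K` intertwine the `Uᵢ` with unitaries `Vᵢ`. For
the Szegő kernel vectors `k_w`, the vectors `J k_w - φ(w) • W k_w` have Gram kernel
`(1 - conj φ(w) φ(z)) ⟪k_w, k_z⟫` and lie in the orthogonal sum of a `V₁`-invariant subspace and
a `V₂`-invariant one. Their components satisfy the eigenvector relations of `k_w` there, so the Gram
kernel of each carries a factor `(1 - conj wᵢ zᵢ)⁻¹`. Dividing by `⟪k_w, k_z⟫` yields the Agler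
decomposition
`1 - conj φ(w) φ(z) = (1 - conj w₁ z₁) ⟪a_w, a_z⟫ + (1 - conj w₂ z₂) ⟪b_w, b_z⟫`.
It says that `(1, w₁ a_w, w₂ b_w) ↦ (φ(w), a_w, b_w)` preserves inner products. This map extends to
an isometry once infinitely many copies of the space are added, which makes room for the orthogonal
complement of its domain, and solving for `φ(w)` gives the realization.

Conversely, with `x = (1 - D E)⁻¹ C`, the isometry identity at `(1, E x)` reads
`‖φ(w)‖² + ‖x‖² = 1 + ‖E x‖²`, and `‖E x‖ ≤ ‖x‖`.
-/

open Filter Topology Set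
open scoped ComplexConjugate InnerProductSpace

section PowerSeries

theorem exists_hasSum_of_bounded_of_differentiableOn_ball {f : ℂ → ℂ}
    (hf : DifferentiableOn ℂ f (ball 0 1)) (hb : ∀ t ∈ ball (0 : ℂ) 1, ‖f t‖ ≤ 1) :
    ∃ a : ℕ → ℂ, (∀ i, ‖a i‖ ≤ 1) ∧ ∀ t ∈ ball (0 : ℂ) 1, HasSum (fun i ↦ a i * t ^ i) (f t) := by
  refine ⟨fun i ↦ iteratedDeriv i f 0 / i.factorial, fun i ↦ ?_, fun t ht ↦ ?_⟩
  · have cauchy : ∀ᶠ r : ℝ in 𝓝[<] 1, ‖iteratedDeriv i f 0 / i.factorial‖ ≤ 1 / r ^ i := by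
      filter_upwards [Ioo_mem_nhdsLT (zero_lt_one' ℝ)] with r ⟨hr0, hr1⟩
      have hsub : closedBall (0 : ℂ) r ⊆ ball 0 1 := closedBall_subset_ball hr1
      have hd : DiffContOnCl ℂ f (ball 0 r) := by
        apply DifferentiableOn.diffContOnCl
        rw [closure_ball _ hr0.ne']
        exact hf.mono hsub
      have := norm_iteratedDeriv_le_of_forall_mem_sphere_norm_le i hr0 hd
        fun z hz ↦ hb z (hsub (sphere_subset_closedBall hz))
      rw [norm_div, norm_natCast, div_le_iff₀ (by positivity)]
      exact this.trans_eq (by ring)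
    have hlim : Tendsto (fun r : ℝ ↦ 1 / r ^ i) (𝓝[<] 1) (𝓝 1) := by
      have : ContinuousAt (fun r : ℝ ↦ 1 / r ^ i) 1 := by fun_prop (disch := simp)
      simpa using this.tendsto.mono_left nhdsWithin_le_nhds
    exact ge_of_tendsto hlim cauchy
  · have taylor := hasSum_taylorSeries_on_ball (r := 1) (c := 0) (by simpa using hf) ht
    exact taylor.congr_fun fun i ↦ by simp only [smul_eq_mul, sub_zero]; ring

theorem norm_sub_sum_range_le_of_hasSum {a : ℕ → ℂ} (ha : ∀ i, ‖a i‖ ≤ 1) {t s : ℂ}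
    (ht : ‖t‖ < 1) (h : HasSum (fun i ↦ a i * t ^ i) s) (n : ℕ) :
    ‖s - ∑ i ∈ Finset.range n, a i * t ^ i‖ ≤ ‖t‖ ^ n / (1 - ‖t‖) := by
  have tail := (hasSum_nat_add_iff' n).2 h
  have geometric := (hasSum_geometric_of_lt_one (norm_nonneg t) ht).mul_left (‖t‖ ^ n)
  rw [← tail.tsum_eq, div_eq_mul_inv]
  refine tsum_of_norm_bounded geometric fun i ↦ ?_
  rw [norm_mul, norm_pow, pow_add, mul_comm (‖t‖ ^ n)]
  exact mul_le_of_le_one_left (by positivity) (ha _)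

theorem differentiableOn_coeff_of_hasSum {U : Set ℂ} (hU : IsOpen U) {a : ℕ → ℂ → ℂ}
    {f : ℂ → ℂ → ℂ} (ha : ∀ i, ∀ w ∈ U, ‖a i w‖ ≤ 1)
    (hf : ∀ t ∈ ball (0 : ℂ) 1, DifferentiableOn ℂ (f t) U)
    (hsum : ∀ t ∈ ball (0 : ℂ) 1, ∀ w ∈ U, HasSum (fun i ↦ a i w * t ^ i) (f t w)) (n : ℕ) :
    DifferentiableOn ℂ (a n) U := by
  induction n using Nat.strong_induction_on with
  | _ n ih =>
    let q (t w : ℂ) : ℂ := (f t w - ∑ i ∈ Finset.range n, a i w * t ^ i) / t ^ n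
    have hball : ∀ᶠ t : ℂ in 𝓝[≠] 0, t ∈ ball (0 : ℂ) 1 :=
      nhdsWithin_le_nhds (ball_mem_nhds 0 one_pos)
    have hq : ∀ᶠ t in 𝓝[≠] 0, DifferentiableOn ℂ (q t) U := by
      filter_upwards [hball] with t ht
      refine DifferentiableOn.div_const (DifferentiableOn.sub (hf t ht) ?_) _
      exact DifferentiableOn.fun_sum fun i hi ↦ (ih i (Finset.mem_range.1 hi)).mul_const _
    have error : ∀ᶠ t in 𝓝[≠] 0, ∀ w ∈ U, ‖q t w - a n w‖ ≤ ‖t‖ / (1 - ‖t‖) := by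
      filter_upwards [hball, self_mem_nhdsWithin] with t ht ht0 w hw
      have ht1 : ‖t‖ < 1 := by simpa using ht
      have htn : 0 < ‖t ^ n‖ := norm_pos_iff.2 (pow_ne_zero n ht0)
      have : q t w - a n w = (f t w - ∑ i ∈ Finset.range (n + 1), a i w * t ^ i) / t ^ n := by
        rw [Finset.sum_range_succ, ← sub_sub, sub_div, mul_div_cancel_right₀ _ (pow_ne_zero n ht0)]
      rw [this, norm_div, div_le_iff₀ htn, norm_pow]
      exact (norm_sub_sum_range_le_of_hasSum (fun i ↦ ha i w hw) ht1 (hsum t ht w hw) _).trans_eq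
        (by ring)
    have hlim : Tendsto (fun t : ℂ ↦ ‖t‖ / (1 - ‖t‖)) (𝓝[≠] 0) (𝓝 0) := by
      have : ContinuousAt (fun t : ℂ ↦ ‖t‖ / (1 - ‖t‖)) 0 := by fun_prop (disch := simp)
      simpa using this.tendsto.mono_left nhdsWithin_le_nhds
    have hunif : TendstoUniformlyOn q (a n) (𝓝[≠] 0) U := by
      refine Metric.tendstoUniformlyOn_iff.2 fun ε hε ↦ ?_
      filter_upwards [error, hlim.eventually_lt_const hε] with t ht hε' w hw
      rw [dist_comm, dist_eq_norm]
      exact (ht w hw).trans_lt hε'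
    exact hunif.tendstoLocallyUniformlyOn.differentiableOn hq hU

end PowerSeries

section DoubleSeries

variable {A : Type*} [NormedRing A] [NormedAlgebra ℂ A]

/-- The sum `∑ cᵢⱼ xⁱ yʲ` of the double power series with coefficients `c` at a pair `(x, y)` of
elements of a Banach algebra. -/
noncomputable def doubleSeries (c : ℕ × ℕ → ℂ) (x y : A) : A :=
  ∑' p : ℕ × ℕ, c p • (x ^ p.1 * y ^ p.2)

/-- The double power series with coefficients `c` defines a function in the closed unit ball of
`H^∞(𝔻²)`. -/
structure IsSchurSeries (c : ℕ × ℕ → ℂ) : Prop where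
  norm_coeff_le : ∀ p, ‖c p‖ ≤ 1
  norm_doubleSeries_le : ∀ z ∈ Bidisk, ‖doubleSeries c z.1 z.2‖ ≤ 1

theorem summable_doubleSeries [CompleteSpace A] {c : ℕ × ℕ → ℂ} (hc : ∀ p, ‖c p‖ ≤ 1) {x y : A}
    (hx : ‖x‖ < 1) (hy : ‖y‖ < 1) : Summable fun p : ℕ × ℕ ↦ c p • (x ^ p.1 * y ^ p.2) := by
  have geometric := (summable_norm_geometric_of_norm_lt_one hx).mul_of_nonneg
    (summable_norm_geometric_of_norm_lt_one hy) (fun _ ↦ norm_nonneg _) fun _ ↦ norm_nonneg _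
  refine .of_norm_bounded geometric fun p ↦ ?_
  rw [norm_smul]
  exact (mul_le_of_le_one_left (norm_nonneg _) (hc p)).trans (norm_mul_le _ _)

theorem map_doubleSeries [CompleteSpace A] {B F : Type*} [NormedRing B] [NormedAlgebra ℂ B]
    [FunLike F A B] [AlgHomClass F ℂ A B] {f : F} (hf : Continuous f)
    {c : ℕ × ℕ → ℂ} (hc : ∀ p, ‖c p‖ ≤ 1) {x y : A} (hx : ‖x‖ < 1) (hy : ‖y‖ < 1) :
    f (doubleSeries c x y) = doubleSeries c (f x) (f y) := by
  rw [doubleSeries, (summable_doubleSeries hc hx hy).map_tsum f hf]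
  simp only [map_smul, map_mul, map_pow, doubleSeries]

theorem exists_isSchurSeries {φ : ℂ × ℂ → ℂ}
    (hφ : DifferentiableOn ℂ φ Bidisk) (hb : ∀ z ∈ Bidisk, ‖φ z‖ ≤ 1) :
    ∃ c, IsSchurSeries c ∧ ∀ z ∈ Bidisk, φ z = doubleSeries c z.1 z.2 := by
  have mem {t w : ℂ} (ht : t ∈ ball (0 : ℂ) 1) (hw : w ∈ ball (0 : ℂ) 1) : (t, w) ∈ Bidisk := by
    simpa [Bidisk] using And.intro ht hw
  have slice (w : ℂ) (hw : w ∈ ball (0 : ℂ) 1) :=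
    exists_hasSum_of_bounded_of_differentiableOn_ball (f := fun t ↦ φ (t, w))
      (hφ.comp (by fun_prop) fun t ht ↦ mem ht hw) fun t ht ↦ hb _ (mem ht hw)
  choose! a ha hasum using slice
  have hda (i : ℕ) : DifferentiableOn ℂ (fun w ↦ a w i) (ball 0 1) :=
    differentiableOn_coeff_of_hasSum (a := fun i w ↦ a w i) isOpen_ball (fun i w hw ↦ ha w hw i)
      (fun t ht ↦ hφ.comp (by fun_prop) fun w hw ↦ mem ht hw) (fun t ht w hw ↦ hasum w hw t ht) i
  choose c hc hcsum using fun i ↦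
    exists_hasSum_of_bounded_of_differentiableOn_ball (hda i) fun w hw ↦ ha w hw i
  have eq_series (z : ℂ × ℂ) (hz : z ∈ Bidisk) :
      φ z = doubleSeries (fun p ↦ c p.1 p.2) z.1 z.2 := by
    have hz₁ : z.1 ∈ ball (0 : ℂ) 1 := by simpa using hz.1
    have hz₂ : z.2 ∈ ball (0 : ℂ) 1 := by simpa using hz.2
    have inner (i : ℕ) : HasSum (fun j ↦ c i j • (z.1 ^ i * z.2 ^ j)) (a z.2 i * z.1 ^ i) :=
      ((hcsum i z.2 hz₂).mul_right (z.1 ^ i)).congr_fun fun j ↦ by rw [smul_eq_mul]; ring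
    exact (hasum z.2 hz₂ z.1 hz₁).unique
      ((summable_doubleSeries (fun p ↦ hc p.1 p.2) hz.1 hz.2).hasSum.prod_fiberwise inner)
  exact ⟨fun p ↦ c p.1 p.2, ⟨fun p ↦ hc _ _, fun z hz ↦ eq_series z hz ▸ hb z hz⟩, eq_series⟩

theorem doubleSeries_conj (c : ℕ × ℕ → ℂ) (x y : ℂ) :
    doubleSeries (conj ∘ c) (conj x) (conj y) = conj (doubleSeries c x y) := by
  simp [doubleSeries, conj_tsum]

theorem IsSchurSeries.conj {c : ℕ × ℕ → ℂ} (hc : IsSchurSeries c) : IsSchurSeries (conj ∘ c) where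
  norm_coeff_le p := (norm_conj _).trans_le (hc.norm_coeff_le p)
  norm_doubleSeries_le z hz := by
    rw [← conj_conj z.1, ← conj_conj z.2, doubleSeries_conj, norm_conj]
    exact hc.norm_doubleSeries_le (conj z.1, conj z.2) (by simpa [Bidisk] using hz)

end DoubleSeries

section VonNeumann

theorem norm_le_of_forall_characterSpace {A : Type*} [CommCStarAlgebra A] {a : A} {C : ℝ}
    (hC : 0 ≤ C) (h : ∀ χ : WeakDual.characterSpace ℂ A, ‖χ a‖ ≤ C) : ‖a‖ ≤ C := by
  rw [← (AddMonoidHomClass.isometry_iff_norm _).1 (gelfandTransform_isometry A) a,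
    ContinuousMap.norm_le _ hC]
  exact h

theorem norm_doubleSeries_le_one_of_comm {A : Type*} [CommCStarAlgebra A] {c : ℕ × ℕ → ℂ}
    (hc : IsSchurSeries c) {x y : A} (hx : ‖x‖ < 1) (hy : ‖y‖ < 1) : ‖doubleSeries c x y‖ ≤ 1 := by
  refine norm_le_of_forall_characterSpace zero_le_one fun χ ↦ ?_
  rw [map_doubleSeries (map_continuous χ) hc.norm_coeff_le hx hy]
  exact hc.norm_doubleSeries_le (χ x, χ y)
    ⟨(NonUnitalStarAlgHom.norm_apply_le χ x).trans_lt hx,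
      (NonUnitalStarAlgHom.norm_apply_le χ y).trans_lt hy⟩

open scoped IsMulCommutative in
open StarAlgebra StarSubalgebra in
theorem norm_doubleSeries_le_one {A : Type*} [CStarAlgebra A] {c : ℕ × ℕ → ℂ}
    (hc : IsSchurSeries c) {x y : A} [hxn : IsStarNormal x] [hyn : IsStarNormal y]
    (hxy : Commute x y) (hx : ‖x‖ < 1) (hy : ‖y‖ < 1) : ‖doubleSeries c x y‖ ≤ 1 := by
  have hxy_star : Commute x (star y) := hyn.commute_star_right hxy
  have hyx_star : Commute y (star x) := hxn.commute_star_right hxy.symm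
  have : IsMulCommutative (adjoin ℂ {x, y}) :=
    isMulCommutative_adjoin ℂ (by grind [Commute, SemiconjBy])
      (by grind [star_comm_self', Commute, SemiconjBy])
  let S : StarSubalgebra ℂ A := (adjoin ℂ {x, y}).topologicalClosure
  have : IsClosed (S : Set A) := isClosed_topologicalClosure _
  let _ : CommRing S := (adjoin ℂ {x, y}).commRingTopologicalClosure mul_comm
  let _ : CommCStarAlgebra S := { }
  let x' : S := ⟨x, le_topologicalClosure _ (subset_adjoin ℂ _ (by simp))⟩
  let y' : S := ⟨y, le_topologicalClosure _ (subset_adjoin ℂ _ (by simp))⟩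
  have coe_doubleSeries : doubleSeries c x y = doubleSeries c x' y' :=
    (map_doubleSeries (f := S.subtype) continuous_subtype_val hc.norm_coeff_le hx hy
      (x := x') (y := y')).symm
  rw [coe_doubleSeries]
  exact norm_doubleSeries_le_one_of_comm hc (x := x') (y := y') hx hy

end VonNeumann

section WeakLimit

theorem exists_tendsto_ultrafilter_of_bounded {ι : Type*} (F : Ultrafilter ι) {u : ι → ℂ} {C : ℝ}
    (hu : ∀ᶠ i in F, ‖u i‖ ≤ C) : ∃ b, ‖b‖ ≤ C ∧ Tendsto u F (𝓝 b) := by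
  obtain ⟨b, hb, hlim⟩ := (isCompact_closedBall (0 : ℂ) C).ultrafilter_le_nhds (F.map u) <| by
    rw [Ultrafilter.coe_map, le_principal_iff, Filter.mem_map]
    filter_upwards [hu] with i hi using mem_closedBall_zero_iff.2 hi
  exact ⟨b, by simpa using hb, hlim⟩

variable {L : Type*} [NormedAddCommGroup L] [InnerProductSpace ℂ L]

theorem norm_inner_apply_le {M : L →L[ℂ] L} {C : ℝ} (hM : ‖M‖ ≤ C) (x y : L) :
    ‖⟪x, M y⟫_ℂ‖ ≤ C * ‖x‖ * ‖y‖ :=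
  calc ‖⟪x, M y⟫_ℂ‖ ≤ ‖x‖ * (C * ‖y‖) :=
        (norm_inner_le_norm _ _).trans (by gcongr; exact M.le_of_opNorm_le hM y)
    _ = C * ‖x‖ * ‖y‖ := by ring

theorem exists_weakLimit_of_bounded [CompleteSpace L] {ι : Type*} (F : Ultrafilter ι)
    {M : ι → L →L[ℂ] L} {C : ℝ}
    (hM : ∀ᶠ i in F, ‖M i‖ ≤ C) :
    ∃ T : L →L[ℂ] L, ‖T‖ ≤ C ∧ ∀ x y, Tendsto (fun i ↦ ⟪x, M i y⟫_ℂ) F (𝓝 ⟪x, T y⟫_ℂ) := by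
  have hC : 0 ≤ C := let ⟨i, hi⟩ := hM.exists; (norm_nonneg _).trans hi
  choose B hBle hB using fun x y ↦ exists_tendsto_ultrafilter_of_bounded F
    (hM.mono fun i hi ↦ norm_inner_apply_le hi x y)
  let form : L →L⋆[ℂ] L →L[ℂ] ℂ := LinearMap.mkContinuous₂
    (LinearMap.mk₂'ₛₗ (starRingEnd ℂ) (RingHom.id ℂ) B
      (fun x x' y ↦ tendsto_nhds_unique (hB _ _) <| by
        simpa only [inner_add_left] using (hB x y).add (hB x' y))
      (fun a x y ↦ tendsto_nhds_unique (hB _ _) <| by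
        simpa only [inner_smul_left, smul_eq_mul] using (hB x y).const_mul (conj a))
      (fun x y y' ↦ tendsto_nhds_unique (hB _ _) <| by
        simpa only [map_add, inner_add_right] using (hB x y).add (hB x y'))
      (fun a x y ↦ tendsto_nhds_unique (hB _ _) <| by
        simpa only [map_smul, inner_smul_right, RingHom.id_apply, smul_eq_mul] using
          (hB x y).const_mul a)) C hBle
  let T := InnerProductSpace.continuousLinearMapOfBilin form
  have hT : ‖T‖ ≤ C := T.opNorm_le_bound hC fun x ↦ by
    refine ((InnerProductSpace.toDual ℂ L).symm.norm_map (form x)).trans_le ?_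
    exact (form x).opNorm_le_bound (by positivity) (hBle x)
  refine ⟨T.adjoint, by rwa [LinearIsometryEquiv.norm_map], fun x y ↦ ?_⟩
  rw [ContinuousLinearMap.adjoint_inner_right,
    InnerProductSpace.continuousLinearMapOfBilin_apply form x y]
  exact hB x y

variable [CompleteSpace L] {ι : Type*} {F : Filter ι} {M : ι → L →L[ℂ] L} {T : L →L[ℂ] L}

theorem mem_of_weakLimit [F.NeBot]
    (hT : ∀ x y, Tendsto (fun i ↦ ⟪x, M i y⟫_ℂ) F (𝓝 ⟪x, T y⟫_ℂ)) {S : Submodule ℂ L}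
    (hS : IsClosed (S : Set L)) {y : L} (hM : ∀ᶠ i in F, M i y ∈ S) : T y ∈ S := by
  have : CompleteSpace S := hS.completeSpace_coe
  rw [← S.orthogonal_orthogonal]
  refine fun x hx ↦ tendsto_nhds_unique_of_eventuallyEq (hT x y) tendsto_const_nhds ?_
  filter_upwards [hM] with i hi using S.inner_left_of_mem_orthogonal hi hx

theorem commute_of_weakLimit [F.NeBot]
    (hT : ∀ x y, Tendsto (fun i ↦ ⟪x, M i y⟫_ℂ) F (𝓝 ⟪x, T y⟫_ℂ)) {U : L →L[ℂ] L}
    (hM : ∀ i, Commute (M i) U) : Commute T U := by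
  ext y
  refine ext_inner_left ℂ fun x ↦ tendsto_nhds_unique (hT x (U y)) ?_
  rw [mul_apply_eq_comp, ← ContinuousLinearMap.adjoint_inner_left]
  refine (hT (U.adjoint x) y).congr fun i ↦ ?_
  rw [ContinuousLinearMap.adjoint_inner_left, ← mul_apply_eq_comp, ← (hM i).eq, mul_apply_eq_comp]

end WeakLimit

section FunctionalCalculus

theorem tendsto_doubleSeries_smul {c : ℕ × ℕ → ℂ} (hc : ∀ p, ‖c p‖ ≤ 1) {z : ℂ × ℂ}
    (hz : z ∈ Bidisk) :
    Tendsto (fun r : ℝ ↦ doubleSeries c ((r : ℂ) • z.1) ((r : ℂ) • z.2)) (𝓝[<] 1)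
      (𝓝 (doubleSeries c z.1 z.2)) := by
  have hbound := (summable_norm_geometric_of_norm_lt_one hz.1).mul_of_nonneg
    (summable_norm_geometric_of_norm_lt_one hz.2) (fun _ ↦ norm_nonneg _) fun _ ↦ norm_nonneg _
  refine tendsto_tsum_of_dominated_convergence hbound (fun p ↦ ?_) ?_
  · have : Continuous fun r : ℝ ↦ c p • (((r : ℂ) • z.1) ^ p.1 * ((r : ℂ) • z.2) ^ p.2) := by
      fun_prop
    simpa using (this.tendsto 1).mono_left nhdsWithin_le_nhds
  · filter_upwards [Ioo_mem_nhdsLT (zero_lt_one' ℝ)] with r ⟨hr0, hr1⟩ p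
    have hr (w : ℂ) (n : ℕ) : ‖((r : ℂ) • w) ^ n‖ ≤ ‖w ^ n‖ := by
      rw [norm_pow, norm_pow, norm_smul, norm_real, Real.norm_of_nonneg hr0.le]
      gcongr
      exact mul_le_of_le_one_left (norm_nonneg w) hr1.le
    rw [norm_smul, norm_mul]
    exact (mul_le_of_le_one_left (by positivity) (hc p)).trans (by gcongr <;> exact hr _ _)

variable {L : Type*} [NormedAddCommGroup L] [InnerProductSpace ℂ L]

theorem inner_pow_apply_of_eigen {S : Submodule ℂ L} {X : L →L[ℂ] L} (hX : MapsTo X S S)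
    {k : L} {a : ℂ}
    (hk : ∀ f ∈ S, ⟪k, X f⟫_ℂ = a * ⟪k, f⟫_ℂ) (n : ℕ) {f : L} (hf : f ∈ S) :
    ⟪k, (X ^ n) f⟫_ℂ = a ^ n * ⟪k, f⟫_ℂ := by
  induction n generalizing f with
  | zero => simp
  | succ n ih => rw [pow_succ, mul_apply_eq_comp, ih (hX hf), hk f hf, pow_succ, mul_assoc]

variable [CompleteSpace L] {c : ℕ × ℕ → ℂ} {X Y : L →L[ℂ] L} {S : Submodule ℂ L}

theorem hasSum_doubleSeries_apply (hc : ∀ p, ‖c p‖ ≤ 1) (hX : ‖X‖ < 1) (hY : ‖Y‖ < 1) (f : L) :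
    HasSum (fun p ↦ c p • (X ^ p.1) ((Y ^ p.2) f)) (doubleSeries c X Y f) :=
  (summable_doubleSeries hc hX hY).hasSum.mapL (ContinuousLinearMap.apply ℂ L f)

theorem mapsTo_doubleSeries (hc : ∀ p, ‖c p‖ ≤ 1) (hX : ‖X‖ < 1) (hY : ‖Y‖ < 1)
    (hS : IsClosed (S : Set L)) (hXS : MapsTo X S S) (hYS : MapsTo Y S S) :
    MapsTo (doubleSeries c X Y : L →L[ℂ] L) S S := fun f hf ↦ by
  refine hS.mem_of_tendsto (hasSum_doubleSeries_apply hc hX hY f) (.of_forall fun s ↦ ?_)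
  refine S.sum_mem fun p _ ↦ S.smul_mem _ ?_
  rw [FunLike.coe_pow_eq_iterate, FunLike.coe_pow_eq_iterate]
  exact hXS.iterate _ (hYS.iterate _ hf)

theorem inner_doubleSeries_apply (hc : ∀ p, ‖c p‖ ≤ 1) (hX : ‖X‖ < 1) (hY : ‖Y‖ < 1)
    (hXS : MapsTo X S S) (hYS : MapsTo Y S S) {k : L} {a b : ℂ}
    (ha : ∀ f ∈ S, ⟪k, X f⟫_ℂ = a * ⟪k, f⟫_ℂ) (hb : ∀ f ∈ S, ⟪k, Y f⟫_ℂ = b * ⟪k, f⟫_ℂ) {f : L}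
    (hf : f ∈ S) : ⟪k, doubleSeries c X Y f⟫_ℂ = doubleSeries c a b * ⟪k, f⟫_ℂ := by
  rw [← innerSL_apply_apply ℂ,
    ← ((hasSum_doubleSeries_apply hc hX hY f).mapL (innerSL ℂ k)).tsum_eq,
    doubleSeries, ← tsum_mul_right]
  refine tsum_congr fun p ↦ ?_
  have hYf : (Y ^ p.2) f ∈ S := by
    rw [FunLike.coe_pow_eq_iterate]
    exact hYS.iterate _ hf
  rw [innerSL_apply_apply, inner_smul_right, inner_pow_apply_of_eigen hXS ha _ hYf,
    inner_pow_apply_of_eigen hYS hb _ hf, smul_eq_mul]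
  ring

/-- `T` is a weak cluster value, as `r → 1⁻`, of the double power series with coefficients `c` at
`(rU, rV)`. This gives a meaning to the double power series at the pair `(U, V)` of operators of
norm at most `1`, where it need not converge. -/
def IsRadialLimit (c : ℕ × ℕ → ℂ) (U V T : L →L[ℂ] L) : Prop :=
  ∃ F : Filter ℝ, F.NeBot ∧ F ≤ 𝓝[<] 1 ∧ ∀ x y,
    Tendsto (fun r : ℝ ↦ ⟪x, doubleSeries c ((r : ℂ) • U) ((r : ℂ) • V) y⟫_ℂ) F (𝓝 ⟪x, T y⟫_ℂ)

theorem norm_smul_lt_one_of_mem_Ioo {E : Type*} [SeminormedAddCommGroup E] [NormedSpace ℂ E]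
    {r : ℝ} (hr : r ∈ Ioo 0 1) {x : E} (hx : ‖x‖ ≤ 1) : ‖(r : ℂ) • x‖ < 1 := by
  rw [norm_smul, norm_real, Real.norm_of_nonneg hr.1.le]
  exact (mul_le_of_le_one_right hr.1.le hx).trans_lt hr.2

theorem eventually_mem_Ioo_of_le {F : Filter ℝ} (hF : F ≤ 𝓝[<] 1) : ∀ᶠ r in F, r ∈ Ioo (0 : ℝ) 1 :=
  hF (Ioo_mem_nhdsLT zero_lt_one)

variable {U V T : L →L[ℂ] L}

theorem exists_isRadialLimit (hc : IsSchurSeries c) [IsStarNormal U] [IsStarNormal V]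
    (hUV : Commute U V) (hU : ‖U‖ ≤ 1) (hV : ‖V‖ ≤ 1) :
    ∃ T : L →L[ℂ] L, ‖T‖ ≤ 1 ∧ IsRadialLimit c U V T := by
  let F := Ultrafilter.of (𝓝[<] (1 : ℝ))
  have hF : F ≤ 𝓝[<] (1 : ℝ) := Ultrafilter.of_le _
  obtain ⟨T, hT, hlim⟩ := exists_weakLimit_of_bounded F
    (M := fun r : ℝ ↦ doubleSeries c ((r : ℂ) • U) ((r : ℂ) • V)) <| by
      filter_upwards [eventually_mem_Ioo_of_le hF] with r hr
      exact norm_doubleSeries_le_one hc ((hUV.smul_left _).smul_right _)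
        (norm_smul_lt_one_of_mem_Ioo hr hU) (norm_smul_lt_one_of_mem_Ioo hr hV)
  exact ⟨T, hT, F, inferInstance, hF, hlim⟩

theorem commute_doubleSeries {A : Type*} [NormedRing A] [NormedAlgebra ℂ A] {c : ℕ × ℕ → ℂ}
    {x y a : A} (hx : Commute a x) (hy : Commute a y) : Commute a (doubleSeries c x y) :=
  Commute.tsum_right _ fun _ ↦ ((hx.pow_right _).mul_right (hy.pow_right _)).smul_right _

theorem IsRadialLimit.commute (h : IsRadialLimit c U V T) {X : L →L[ℂ] L} (hU : Commute X U)
    (hV : Commute X V) : Commute T X := by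
  obtain ⟨F, _, -, hT⟩ := h
  exact commute_of_weakLimit hT fun r ↦
    (commute_doubleSeries (hU.smul_right _) (hV.smul_right _)).symm

theorem IsRadialLimit.mapsTo (h : IsRadialLimit c U V T) (hc : ∀ p, ‖c p‖ ≤ 1) (hU : ‖U‖ ≤ 1)
    (hV : ‖V‖ ≤ 1) (hS : IsClosed (S : Set L)) (hUS : MapsTo U S S) (hVS : MapsTo V S S) :
    MapsTo T S S := by
  obtain ⟨F, _, hF, hT⟩ := h
  refine fun f hf ↦ mem_of_weakLimit hT hS ?_
  filter_upwards [eventually_mem_Ioo_of_le hF] with r hr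
  exact mapsTo_doubleSeries hc (norm_smul_lt_one_of_mem_Ioo hr hU)
    (norm_smul_lt_one_of_mem_Ioo hr hV) hS (fun x hx ↦ S.smul_mem _ (hUS hx))
    (fun x hx ↦ S.smul_mem _ (hVS hx)) hf

theorem IsRadialLimit.inner_apply (h : IsRadialLimit c U V T) (hc : ∀ p, ‖c p‖ ≤ 1) (hU : ‖U‖ ≤ 1)
    (hV : ‖V‖ ≤ 1) (hUS : MapsTo U S S) (hVS : MapsTo V S S) {k : L} {z : ℂ × ℂ} (hz : z ∈ Bidisk)
    (hkU : ∀ f ∈ S, ⟪k, U f⟫_ℂ = z.1 * ⟪k, f⟫_ℂ) (hkV : ∀ f ∈ S, ⟪k, V f⟫_ℂ = z.2 * ⟪k, f⟫_ℂ)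
    {f : L} (hf : f ∈ S) : ⟪k, T f⟫_ℂ = doubleSeries c z.1 z.2 * ⟪k, f⟫_ℂ := by
  obtain ⟨F, _, hF, hT⟩ := h
  refine tendsto_nhds_unique_of_eventuallyEq (hT k f)
    (((tendsto_doubleSeries_smul hc hz).mono_left hF).mul_const _) ?_
  filter_upwards [eventually_mem_Ioo_of_le hF] with r hr
  refine inner_doubleSeries_apply hc (norm_smul_lt_one_of_mem_Ioo hr hU)
    (norm_smul_lt_one_of_mem_Ioo hr hV) (fun x hx ↦ S.smul_mem _ (hUS hx))
    (fun x hx ↦ S.smul_mem _ (hVS hx)) (fun g hg ↦ ?_) (fun g hg ↦ ?_) hf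
  · rw [_root_.smul_apply, inner_smul_right, hkU g hg, smul_eq_mul, mul_assoc]
  · rw [_root_.smul_apply, inner_smul_right, hkV g hg, smul_eq_mul, mul_assoc]

end FunctionalCalculus

theorem inner_apply_of_symm_sub_smul_mem_orthogonal {K : Type*} [NormedAddCommGroup K]
    [InnerProductSpace ℂ K] {V : K ≃ₗᵢ[ℂ] K} {S : Submodule ℂ K} {x s : K} {c : ℂ}
    (hx : V.symm x - c • x ∈ Sᗮ) (hs : s ∈ S) : ⟪x, V s⟫_ℂ = conj c * ⟪x, s⟫_ℂ := by
  have := Submodule.inner_left_of_mem_orthogonal hs hx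
  rwa [inner_sub_left, inner_smul_left, V.symm.inner_map_eq_flip, V.symm_symm, sub_eq_zero] at this

section CoordinateSubspace

variable {ι L : Type*} [NormedAddCommGroup L] [InnerProductSpace ℂ L] (e : HilbertBasis ι ℂ L)

theorem eq_of_forall_inner_basis_eq {f g : L} (h : ∀ i, ⟪e i, f⟫_ℂ = ⟪e i, g⟫_ℂ) : f = g :=
  e.repr.injective <| lp.ext <| funext fun i ↦ by
    rw [e.repr_apply_apply, e.repr_apply_apply, h i]

/-- The closed span of the basis vectors with index in `A`, described as the set of vectors whose
coordinates outside `A` vanish. -/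
noncomputable def coordSubspace (A : Set ι) : Submodule ℂ L := (Submodule.span ℂ (e '' Aᶜ))ᗮ

variable {e} {A B : Set ι} {f g : L}

theorem mem_coordSubspace : f ∈ coordSubspace e A ↔ ∀ i ∉ A, ⟪e i, f⟫_ℂ = 0 := by
  rw [coordSubspace, ← Submodule.span_singleton_le_iff_mem, ← Submodule.IsOrtho,
    Submodule.isOrtho_comm, Submodule.isOrtho_span]
  simp

theorem isClosed_coordSubspace : IsClosed (coordSubspace e A : Set L) :=
  Submodule.isClosed_orthogonal _

theorem basis_mem_coordSubspace {i : ι} (hi : i ∈ A) : e i ∈ coordSubspace e A :=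
  mem_coordSubspace.2 fun _ hj ↦ e.orthonormal.2 (ne_of_mem_of_not_mem hi hj).symm

theorem coordSubspace_mono (h : A ⊆ B) : coordSubspace e A ≤ coordSubspace e B := fun _ hf ↦
  mem_coordSubspace.2 fun i hi ↦ mem_coordSubspace.1 hf i fun hA ↦ hi (h hA)

theorem isOrtho_coordSubspace (h : Disjoint A B) : coordSubspace e A ⟂ coordSubspace e B := by
  refine Submodule.isOrtho_iff_inner_eq.2 fun f hf g hg ↦ ?_
  rw [← e.tsum_inner_mul_inner f g, ← tsum_zero]
  refine tsum_congr fun i ↦ ?_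
  by_cases hi : i ∈ A
  · rw [mem_coordSubspace.1 hg i (h.notMem_of_mem_left hi), mul_zero]
  · rw [inner_eq_zero_symm.1 (mem_coordSubspace.1 hf i hi), zero_mul]

theorem coordSubspace_union [CompleteSpace L] :
    coordSubspace e (A ∪ B) = coordSubspace e A ⊔ coordSubspace e B := by
  refine le_antisymm (fun f hf ↦ ?_)
    (sup_le (coordSubspace_mono subset_union_left) (coordSubspace_mono subset_union_right))
  have : CompleteSpace (coordSubspace e A) := isClosed_coordSubspace.completeSpace_coe
  let P := (coordSubspace e A).starProjection
  refine Submodule.mem_sup.2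
    ⟨P f, Submodule.starProjection_apply_mem _ _, f - P f, ?_, add_sub_cancel _ _⟩
  refine mem_coordSubspace.2 fun i hi ↦ ?_
  by_cases hiA : i ∈ A
  · exact Submodule.sub_starProjection_mem_orthogonal f _ (basis_mem_coordSubspace hiA)
  · rw [inner_sub_right, mem_coordSubspace.1 hf i (by simp [hiA, hi]),
      mem_coordSubspace.1 (Submodule.starProjection_apply_mem _ f) i hiA, sub_zero]

end CoordinateSubspace

section Shift

variable {G L : Type*} [AddCommGroup G] [NormedAddCommGroup L] [InnerProductSpace ℂ L]
  [CompleteSpace L]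

/-- The translation of the coordinates with respect to a Hilbert basis indexed by a group; it sends
the basis vector with index `n` to the one with index `n + a`. -/
noncomputable def shift (e : HilbertBasis G ℂ L) (a : G) : L ≃ₗᵢ[ℂ] L :=
  e.repr.trans (LinearIsometryEquiv.symm (HilbertBasis.mk
    (e.orthonormal.comp _ (add_left_injective a))
    (by rw [(add_right_surjective a).range_comp, e.dense_span])).repr)

variable {e : HilbertBasis G ℂ L}

theorem inner_basis_shift (a n : G) (f : L) : ⟪e n, shift e a f⟫_ℂ = ⟪e (n - a), f⟫_ℂ := by
  have := (HilbertBasis.mk (e.orthonormal.comp _ (add_left_injective a))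
    (by rw [(add_right_surjective a).range_comp, e.dense_span])).repr_apply_apply
      (shift e a f) (n - a)
  simpa [shift, e.repr_apply_apply] using this.symm

theorem shift_shift (a b : G) (f : L) : shift e a (shift e b f) = shift e (a + b) f :=
  eq_of_forall_inner_basis_eq e fun n ↦ by simp only [inner_basis_shift, sub_sub]

theorem shift_symm (a : G) : (shift e a).symm = shift e (-a) :=
  LinearIsometryEquiv.ext fun f ↦ (shift e a).symm_apply_eq.2 <|
    eq_of_forall_inner_basis_eq e fun n ↦ by
      rw [shift_shift, inner_basis_shift, add_neg_cancel, sub_zero]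

theorem commute_shift (a b : G) :
    Commute (shift e a : L →L[ℂ] L) (shift e b : L →L[ℂ] L) :=
  ContinuousLinearMap.ext fun f ↦ by
    simp [mul_apply_eq_comp, shift_shift, add_comm a b]

theorem norm_shift_le (a : G) : ‖(shift e a : L →L[ℂ] L)‖ ≤ 1 :=
  (shift e a).toLinearIsometry.norm_toContinuousLinearMap_le

theorem star_shift (a : G) : star (shift e a : L →L[ℂ] L) = (shift e (-a) : L →L[ℂ] L) := by
  rw [LinearIsometryEquiv.star_eq_symm, shift_symm]

instance isStarNormal_shift (a : G) : IsStarNormal (shift e a : L →L[ℂ] L) :=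
  ⟨by rw [star_shift]; exact commute_shift _ _⟩

theorem mapsTo_shift {a : G} {A B : Set G} (h : ∀ n ∈ A, n + a ∈ B) :
    MapsTo (shift e a) (coordSubspace e A) (coordSubspace e B) := fun f hf ↦
  mem_coordSubspace.2 fun n hn ↦ by
    rw [inner_basis_shift]
    exact mem_coordSubspace.1 hf _ fun hA ↦ hn (by simpa using h _ hA)

theorem shift_symm_sub_smul_mem_orthogonal {a : G} {A : Set G} {c : ℂ} {k : L}
    (hk : ∀ n ∈ A, ⟪e (n + a), k⟫_ℂ = c * ⟪e n, k⟫_ℂ) :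
    (shift e a).symm k - c • k ∈ (coordSubspace e A)ᗮ := by
  refine Submodule.isOrtho_iff_le.1 (isOrtho_coordSubspace disjoint_compl_left)
    (mem_coordSubspace.2 fun n hn ↦ ?_)
  rw [shift_symm, inner_sub_right, inner_basis_shift, sub_neg_eq_add, inner_smul_right,
    hk n (not_notMem.1 hn), sub_self]

end Shift

section Szego

variable {L : Type*} [NormedAddCommGroup L] [InnerProductSpace ℂ L] [CompleteSpace L]
  (e : HilbertBasis (ℤ × ℤ) ℂ L) {w z : ℂ × ℂ}

/-- The Szegő kernel vector of the bidisk at `w`, whose nonzero coordinates `w₁ᵐ w₂ⁿ` are those with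
index `(m, n)` in the quadrant `0 ≤ m`, `0 ≤ n`. -/
noncomputable def szegoVector (w : ℂ × ℂ) : L :=
  ∑' p : ℕ × ℕ, (w.1 ^ p.1 * w.2 ^ p.2) • e (Prod.map (↑) (↑) p)

variable {e}

theorem hasSum_szegoVector (hw : w ∈ Bidisk) :
    HasSum (fun p : ℕ × ℕ ↦ (w.1 ^ p.1 * w.2 ^ p.2) • e (Prod.map (↑) (↑) p))
      (szegoVector e w) := by
  refine Summable.hasSum (.of_norm ?_)
  simpa only [norm_smul, e.orthonormal.1, mul_one, one_smul, Pi.one_apply] using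
    (summable_doubleSeries (c := 1) (by simp) hw.1 hw.2).norm

theorem inner_basis_szegoVector (hw : w ∈ Bidisk) (p : ℕ × ℕ) :
    ⟪e (Prod.map (↑) (↑) p), szegoVector e w⟫_ℂ = w.1 ^ p.1 * w.2 ^ p.2 := by
  refine (((hasSum_szegoVector hw).mapL (innerSL ℂ (e _))).congr_fun fun q ↦ ?_).unique
    (hasSum_ite_eq p (w.1 ^ p.1 * w.2 ^ p.2))
  rw [innerSL_apply_apply, inner_smul_right, orthonormal_iff_ite.1 e.orthonormal]
  by_cases h : q = p
  · simp [h]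
  · have : (Prod.map (↑) (↑) p : ℤ × ℤ) ≠ Prod.map (↑) (↑) q := by
      simpa [Prod.ext_iff, eq_comm] using h
    simp [h, this]

theorem szegoVector_mem (hw : w ∈ Bidisk) : szegoVector e w ∈ coordSubspace e (Ici 0) := by
  refine isClosed_coordSubspace.mem_of_tendsto (hasSum_szegoVector hw) (.of_forall fun s ↦ ?_)
  exact Submodule.sum_mem _ fun p _ ↦ Submodule.smul_mem _ _ <| basis_mem_coordSubspace <| by
    simp [Prod.le_def]

theorem inner_szegoVector (hw : w ∈ Bidisk) (hz : z ∈ Bidisk) :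
    (1 - conj w.1 * z.1) * (1 - conj w.2 * z.2) * ⟪szegoVector e w, szegoVector e z⟫_ℂ = 1 := by
  have norm_lt_one {a b : ℂ} (ha : ‖a‖ < 1) (hb : ‖b‖ < 1) : ‖conj a * b‖ < 1 := by
    rw [norm_mul, norm_conj]
    exact mul_lt_one_of_nonneg_of_lt_one_left (norm_nonneg _) ha hb.le
  have h₁ := norm_lt_one hw.1 hz.1
  have h₂ := norm_lt_one hw.2 hz.2
  have inner_eq : ⟪szegoVector e w, szegoVector e z⟫_ℂ =
      ∑' p : ℕ × ℕ, (conj w.1 * z.1) ^ p.1 * (conj w.2 * z.2) ^ p.2 := by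
    have hasSum := (hasSum_szegoVector (e := e) hz).mapL (innerSL ℂ (szegoVector e w))
    refine (hasSum.congr_fun fun p ↦ ?_).tsum_eq.symm
    rw [innerSL_apply_apply, inner_smul_right, ← inner_conj_symm, inner_basis_szegoVector hw]
    simp only [map_mul, map_pow]
    ring
  have tsum_eq := tsum_mul_tsum_of_summable_norm (summable_norm_geometric_of_norm_lt_one h₁)
    (summable_norm_geometric_of_norm_lt_one h₂)
  rw [tsum_geometric_of_norm_lt_one h₁, tsum_geometric_of_norm_lt_one h₂] at tsum_eq
  rw [inner_eq, ← tsum_eq, mul_mul_mul_comm, mul_inv_cancel₀, mul_inv_cancel₀, one_mul]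
  all_goals exact sub_ne_zero.2 (by rintro h; simp [← h] at h₁ h₂)

theorem inner_basis_add_szegoVector (hw : w ∈ Bidisk) (p : ℕ × ℕ) {n : ℤ × ℤ} (hn : n ∈ Ici 0) :
    ⟪e (n + Prod.map (↑) (↑) p), szegoVector e w⟫_ℂ =
      w.1 ^ p.1 * w.2 ^ p.2 * ⟪e n, szegoVector e w⟫_ℂ := by
  obtain ⟨q, rfl⟩ : ∃ q : ℕ × ℕ, Prod.map (↑) (↑) q = n :=
    ⟨(n.1.toNat, n.2.toNat), Prod.ext (Int.toNat_of_nonneg hn.1) (Int.toNat_of_nonneg hn.2)⟩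
  have cast_add : (Prod.map (↑) (↑) q + Prod.map (↑) (↑) p : ℤ × ℤ) = Prod.map (↑) (↑) (q + p) :=
    Prod.ext (Nat.cast_add _ _).symm (Nat.cast_add _ _).symm
  rw [cast_add, inner_basis_szegoVector hw, inner_basis_szegoVector hw, Prod.fst_add,
    Prod.snd_add, pow_add, pow_add]
  ring

theorem shift_fst_symm_szegoVector_sub_mem (hw : w ∈ Bidisk) :
    (shift e (1, 0)).symm (szegoVector e w) - w.1 • szegoVector e w ∈ (coordSubspace e (Ici 0))ᗮ :=
  shift_symm_sub_smul_mem_orthogonal fun _ hn ↦ by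
    simpa using inner_basis_add_szegoVector hw (1, 0) hn

theorem shift_snd_symm_szegoVector_sub_mem (hw : w ∈ Bidisk) :
    (shift e (0, 1)).symm (szegoVector e w) - w.2 • szegoVector e w ∈ (coordSubspace e (Ici 0))ᗮ :=
  shift_symm_sub_smul_mem_orthogonal fun _ hn ↦ by
    simpa using inner_basis_add_szegoVector hw (0, 1) hn

end Szego

section Coupling

theorem exists_defect {A : Type*} [CStarAlgebra A] [PartialOrder A] [StarOrderedRing A] {a : A}
    (ha : ‖a‖ ≤ 1) :
    ∃ d : A, star a * a + star d * d = 1 ∧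
      ∀ b, Commute b a → Commute b (star a) → Commute b d := by
  have nonneg : 0 ≤ 1 - star a * a := by
    rw [sub_nonneg, ← map_one (algebraMap ℝ A)]
    exact CStarAlgebra.star_mul_le_algebraMap_norm_sq.trans
      (algebraMap_mono _ (pow_le_one₀ (norm_nonneg _) ha))
  refine ⟨CFC.sqrt (1 - star a * a), ?_, fun b hb hb' ↦ ?_⟩
  · rw [(CFC.sqrt_nonneg (1 - star a * a)).isSelfAdjoint.star_eq,
      CFC.sqrt_mul_sqrt_self _ nonneg, add_sub_cancel]
  · rw [CFC.sqrt]
    exact (((Commute.one_right b).sub_right (hb'.mul_right hb)).symm.cfcₙ_nnreal _).symm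

variable {ι L K : Type*} [NormedAddCommGroup L] [InnerProductSpace ℂ L]
  [NormedAddCommGroup K] [InnerProductSpace ℂ K]

theorem norm_sq_add_norm_sq_of_star_mul_add_star_mul [CompleteSpace L] {T D : L →L[ℂ] L}
    (h : star T * T + star D * D = 1) (f : L) : ‖T f‖ ^ 2 + ‖D f‖ ^ 2 = ‖f‖ ^ 2 := by
  rw [T.apply_norm_sq_eq_inner_adjoint_right, D.apply_norm_sq_eq_inner_adjoint_right, ← map_add,
    ← inner_add_right, ← inner_self_eq_norm_sq (𝕜 := ℂ)]
  exact congr(RCLike.re ⟪f, $h f⟫_ℂ)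

/-- `J` and `W` embed two copies of `L` isometrically into `K`, the maps `V i` extend the maps `U i`
on both copies, and `T = J⋆ W`. In scattering theory, `V` is a unitary coupling of `U` with itself,
and `T` is its scattering operator. -/
structure IsUnitaryCoupling (U : ι → L ≃ₗᵢ[ℂ] L) (T : L →L[ℂ] L) (V : ι → K ≃ₗᵢ[ℂ] K)
    (J W : L →ₗᵢ[ℂ] K) : Prop where
  map_left : ∀ i f, V i (J f) = J (U i f)
  map_right : ∀ i f, V i (W f) = W (U i f)
  inner_left_right : ∀ f g, ⟪J f, W g⟫_ℂ = ⟪f, T g⟫_ℂ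

theorem exists_isUnitaryCoupling [CompleteSpace L] {U : ι → L ≃ₗᵢ[ℂ] L} {T : L →L[ℂ] L}
    (hT : ‖T‖ ≤ 1) (hUT : ∀ i, Commute (U i : L →L[ℂ] L) T)
    (hUT' : ∀ i, Commute (U i : L →L[ℂ] L) (star T)) :
    ∃ (V : ι → WithLp 2 (L × L) ≃ₗᵢ[ℂ] WithLp 2 (L × L)) (J W : L →ₗᵢ[ℂ] WithLp 2 (L × L)),
      IsUnitaryCoupling U T V J W := by
  obtain ⟨D, hD, hUD⟩ := exists_defect hT
  have commute_apply {S : L →L[ℂ] L} {i : ι} (h : Commute (U i : L →L[ℂ] L) S) (f : L) :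
      U i (S f) = S (U i f) := congr($h f)
  let inl : L →ₗ[ℂ] WithLp 2 (L × L) :=
    (WithLp.linearEquiv 2 ℂ (L × L)).symm ∘ₗ LinearMap.inl ℂ L L
  let col : L →ₗ[ℂ] WithLp 2 (L × L) :=
    (WithLp.linearEquiv 2 ℂ (L × L)).symm ∘ₗ (T : L →ₗ[ℂ] L).prod (D : L →ₗ[ℂ] L)
  have norm_col (f : L) : ‖col f‖ = ‖f‖ := by
    refine (sq_eq_sq₀ (norm_nonneg _) (norm_nonneg _)).1 ?_
    rw [WithLp.prod_norm_sq_eq_of_L2]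
    exact norm_sq_add_norm_sq_of_star_mul_add_star_mul hD f
  refine ⟨fun i ↦ LinearIsometryEquiv.withLpProdCongr 2 (U i) (U i),
    ⟨inl, fun f ↦ WithLp.norm_toLp_fst 2 L L f⟩, ⟨col, norm_col⟩, fun i f ↦ ?_, fun i f ↦ ?_,
    fun f g ↦ ?_⟩
  · exact congr(WithLp.toLp 2 (U i f, $(map_zero (U i))))
  · exact congr(WithLp.toLp 2 ($(commute_apply (hUT i) f),
      $(commute_apply (hUD _ (hUT i) (hUT' i)) f)))
  · change ⟪inl f, col g⟫_ℂ = _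
    simp [inl, col, WithLp.prod_inner_apply]

theorem mapsTo_orthogonal {V : K ≃ₗᵢ[ℂ] K} {S : Submodule ℂ K} (h : MapsTo V.symm S S) :
    MapsTo V Sᗮ Sᗮ := fun x hx s hs ↦ by
  rw [← V.apply_symm_apply s, V.inner_map_map]
  exact hx _ (h hs)

variable {U : ι → L ≃ₗᵢ[ℂ] L} {T : L →L[ℂ] L} {V : ι → K ≃ₗᵢ[ℂ] K} {J W : L →ₗᵢ[ℂ] K}
  {S : Submodule ℂ L} {i : ι}

namespace IsUnitaryCoupling

theorem symm (h : IsUnitaryCoupling U T V J W) :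
    IsUnitaryCoupling (fun i ↦ (U i).symm) T (fun i ↦ (V i).symm) J W where
  map_left i f := by rw [LinearIsometryEquiv.symm_apply_eq, h.map_left, (U i).apply_symm_apply]
  map_right i f := by rw [LinearIsometryEquiv.symm_apply_eq, h.map_right, (U i).apply_symm_apply]
  inner_left_right := h.inner_left_right

theorem mapsTo_map_left (h : IsUnitaryCoupling U T V J W) (hS : MapsTo (U i) S S) :
    MapsTo (V i) (S.map J.toLinearMap) (S.map J.toLinearMap) := by
  rintro _ ⟨f, hf, rfl⟩
  exact ⟨U i f, hS hf, (h.map_left i f).symm⟩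

theorem mapsTo_map_right (h : IsUnitaryCoupling U T V J W) (hS : MapsTo (U i) S S) :
    MapsTo (V i) (S.map W.toLinearMap) (S.map W.toLinearMap) := by
  rintro _ ⟨f, hf, rfl⟩
  exact ⟨U i f, hS hf, (h.map_right i f).symm⟩

end IsUnitaryCoupling

end Coupling

section Wandering

variable {K : Type*} [NormedAddCommGroup K] [InnerProductSpace ℂ K]

theorem inner_sub_smul_apply {V : K →ₗᵢ[ℂ] K} {x y : K} {a b : ℂ}
    (hxy : ⟪x, V y⟫_ℂ = conj a * ⟪x, y⟫_ℂ) (hyx : ⟪y, V x⟫_ℂ = conj b * ⟪y, x⟫_ℂ) :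
    ⟪x - a • V x, y - b • V y⟫_ℂ = (1 - conj a * b) * ⟪x, y⟫_ℂ := by
  have hyx' : ⟪V x, y⟫_ℂ = b * ⟪x, y⟫_ℂ := by
    rw [← inner_conj_symm, hyx, map_mul, conj_conj, inner_conj_symm]
  simp only [inner_sub_left, inner_sub_right, inner_smul_left, inner_smul_right, V.inner_map_map,
    hxy, hyx']
  ring

theorem exists_decomposition_of_mem_sup {ι : Type*} {S₁ S₂ : Submodule ℂ K} (hS : S₁ ⟂ S₂)
    {V₁ V₂ : K →ₗᵢ[ℂ] K} (hV₁ : MapsTo V₁ S₁ S₁) (hV₂ : MapsTo V₂ S₂ S₂) {d : ι → K}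
    {c₁ c₂ : ι → ℂ} (hd : ∀ i, d i ∈ S₁ ⊔ S₂)
    (h₁ : ∀ i, ∀ s ∈ S₁, ⟪d i, V₁ s⟫_ℂ = conj (c₁ i) * ⟪d i, s⟫_ℂ)
    (h₂ : ∀ i, ∀ s ∈ S₂, ⟪d i, V₂ s⟫_ℂ = conj (c₂ i) * ⟪d i, s⟫_ℂ) :
    ∃ a b : ι → K, ∀ i j, (1 - conj (c₁ i) * c₁ j) * (1 - conj (c₂ i) * c₂ j) * ⟪d i, d j⟫_ℂ =
      (1 - conj (c₁ i) * c₁ j) * ⟪a i, a j⟫_ℂ + (1 - conj (c₂ i) * c₂ j) * ⟪b i, b j⟫_ℂ := by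
  choose x hx y hy hxy using fun i ↦ Submodule.mem_sup.1 (hd i)
  have ortho := Submodule.isOrtho_iff_inner_eq.1 hS
  have inner_left (i : ι) (s : K) (hs : s ∈ S₁) : ⟪d i, s⟫_ℂ = ⟪x i, s⟫_ℂ := by
    rw [← hxy, inner_add_left, inner_eq_zero_symm.1 (ortho s hs _ (hy i)), add_zero]
  have inner_right (i : ι) (s : K) (hs : s ∈ S₂) : ⟪d i, s⟫_ℂ = ⟪y i, s⟫_ℂ := by
    rw [← hxy, inner_add_left, ortho _ (hx i) s hs, zero_add]
  have hVx (i j : ι) : ⟪x i, V₁ (x j)⟫_ℂ = conj (c₁ i) * ⟪x i, x j⟫_ℂ := by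
    rw [← inner_left i _ (hV₁ (hx j)), ← inner_left i _ (hx j), h₁ i _ (hx j)]
  have hVy (i j : ι) : ⟪y i, V₂ (y j)⟫_ℂ = conj (c₂ i) * ⟪y i, y j⟫_ℂ := by
    rw [← inner_right i _ (hV₂ (hy j)), ← inner_right i _ (hy j), h₂ i _ (hy j)]
  refine ⟨fun i ↦ y i - c₂ i • V₂ (y i), fun i ↦ x i - c₁ i • V₁ (x i), fun i j ↦ ?_⟩
  have inner_eq : ⟪d i, d j⟫_ℂ = ⟪x i, x j⟫_ℂ + ⟪y i, y j⟫_ℂ := by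
    rw [← inner_left i _ (hx j), ← inner_right i _ (hy j), ← inner_add_right, hxy]
  rw [inner_eq, inner_sub_smul_apply (hVx i j) (hVx j i), inner_sub_smul_apply (hVy i j) (hVy j i)]
  ring

variable {P N₁ N₂ J : Submodule ℂ K}

theorem isOrtho_closure_inf_sup (hPJ : P ⟂ J) (hN : N₁ ⟂ N₂) (hN₁ : N₁ ≤ P) :
    N₁ ⟂ (P ⊓ (N₂ ⊔ J)).topologicalClosure := by
  rw [Submodule.isOrtho_iff_le, Submodule.orthogonal_closure, ← Submodule.isOrtho_iff_le]
  exact (Submodule.isOrtho_sup_right.2 ⟨hN, hPJ.mono_left hN₁⟩).mono_right inf_le_right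

theorem isOrtho_inf_orthogonal_closure (hPJ : P ⟂ J) :
    P ⊓ (N₁ ⊔ N₂)ᗮ ⟂ (P ⊓ (N₂ ⊔ J)).topologicalClosure := by
  rw [Submodule.isOrtho_iff_le, Submodule.orthogonal_closure, ← Submodule.isOrtho_iff_le]
  have hN : P ⊓ (N₁ ⊔ N₂)ᗮ ⟂ N₂ :=
    (Submodule.isOrtho_orthogonal_left _).mono inf_le_right le_sup_right
  exact (Submodule.isOrtho_sup_right.2 ⟨hN, hPJ.mono_left inf_le_left⟩).mono_right inf_le_right

theorem inf_orthogonal_le_sup_closure [CompleteSpace K] (hP : IsClosed (P : Set K)) (hPJ : P ⟂ J)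
    (hN : N₁ ⟂ N₂) (hN₁ : N₁ ≤ P) (hN₂ : N₂ ≤ P ⊔ J) :
    P ⊓ N₁ᗮ ≤ P ⊓ (N₁ ⊔ N₂)ᗮ ⊔ (P ⊓ (N₂ ⊔ J)).topologicalClosure := by
  rintro d ⟨hdP, hdN⟩
  let R := (P ⊓ (N₂ ⊔ J)).topologicalClosure
  have : CompleteSpace R := (Submodule.isClosed_topologicalClosure _).completeSpace_coe
  have hRP : R ≤ P := Submodule.topologicalClosure_minimal _ inf_le_left hP
  have hRN : R ≤ N₁ᗮ := Submodule.isOrtho_iff_le.1 (isOrtho_closure_inf_sup hPJ hN hN₁).symm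
  have hRd : R.starProjection d ∈ R := R.starProjection_apply_mem d
  have hsR : d - R.starProjection d ∈ Rᗮ := R.sub_starProjection_mem_orthogonal d
  have hsP : d - R.starProjection d ∈ P := P.sub_mem hdP (hRP hRd)
  have hsN₂ : d - R.starProjection d ∈ N₂ᗮ := fun n hn ↦ by
    obtain ⟨p, hp, j, hj, rfl⟩ := Submodule.mem_sup.1 (hN₂ hn)
    have hpR : p ∈ R := Submodule.le_topologicalClosure _
      ⟨hp, by simpa using Submodule.sub_mem_sup hn hj⟩
    rw [inner_add_left, hsR p hpR, zero_add]
    exact Submodule.isOrtho_iff_inner_eq.1 hPJ.symm j hj _ hsP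
  refine Submodule.mem_sup.2 ⟨_, ⟨hsP, ?_⟩, _, hRd, sub_add_cancel _ _⟩
  rw [← Submodule.inf_orthogonal]
  exact ⟨sub_mem hdN (hRN hRd), hsN₂⟩

end Wandering

section Scattering

variable {ι L K : Type*} [NormedAddCommGroup L] [InnerProductSpace ℂ L]
  [NormedAddCommGroup K] [InnerProductSpace ℂ K]
  {U : ι → L ≃ₗᵢ[ℂ] L} {T : L →L[ℂ] L} {V : ι → K ≃ₗᵢ[ℂ] K} {J W : L →ₗᵢ[ℂ] K}
  {H E : Submodule ℂ L}

/-- The orthogonal complement of `J(Hᗮ)` in `K`, that is `J(H) ⊕ J(L)ᗮ` when `H` is closed. -/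
noncomputable def extendedSpace (J : L →ₗᵢ[ℂ] K) (H : Submodule ℂ L) : Submodule ℂ K :=
  (Hᗮ.map J.toLinearMap)ᗮ

theorem mem_extendedSpace {x : K} : x ∈ extendedSpace J H ↔ ∀ f ∈ Hᗮ, ⟪J f, x⟫_ℂ = 0 := by
  simp [extendedSpace, Submodule.mem_orthogonal]

theorem map_mem_extendedSpace {f : L} (hf : f ∈ H) : J f ∈ extendedSpace J H :=
  mem_extendedSpace.2 fun g hg ↦ by
    rw [J.inner_map_map, Submodule.inner_left_of_mem_orthogonal hf hg]

theorem isOrtho_extendedSpace_map (hHE : H ⟂ E) : extendedSpace J H ⟂ E.map J.toLinearMap :=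
  (Submodule.isOrtho_orthogonal_left _).mono_right
    (Submodule.map_mono (Submodule.isOrtho_iff_le.1 hHE.symm))

namespace IsUnitaryCoupling

variable {p q : ι}

theorem mapsTo_extendedSpace (h : IsUnitaryCoupling U T V J W) (hH : MapsTo (U p) H H) :
    MapsTo (V p) (extendedSpace J H) (extendedSpace J H) := by
  have hH' : MapsTo (U p).symm Hᗮ Hᗮ :=
    mapsTo_orthogonal (V := (U p).symm) ((U p).symm_symm.symm ▸ hH)
  exact mapsTo_orthogonal (h.symm.mapsTo_map_left hH')

theorem map_right_le_extendedSpace (h : IsUnitaryCoupling U T V J W) (hT : MapsTo T H H) :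
    H.map W.toLinearMap ≤ extendedSpace J H := by
  rintro _ ⟨f, hf, rfl⟩
  refine mem_extendedSpace.2 fun g hg ↦ ?_
  rw [W.coe_toLinearMap, h.inner_left_right, Submodule.inner_left_of_mem_orthogonal (hT hf) hg]

theorem map_right_le_extendedSpace_sup (h : IsUnitaryCoupling U T V J W)
    (hT : MapsTo T E (H ⊔ E : Submodule ℂ L)) :
    E.map W.toLinearMap ≤ extendedSpace J H ⊔ E.map J.toLinearMap := by
  rintro _ ⟨f, hf, rfl⟩
  obtain ⟨u, hu, v, hv, huv⟩ := Submodule.mem_sup.1 (hT hf)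
  refine Submodule.mem_sup.2 ⟨W f - J v, mem_extendedSpace.2 fun g hg ↦ ?_, J v,
    Submodule.mem_map_of_mem hv, sub_add_cancel _ _⟩
  rw [inner_sub_right, h.inner_left_right, J.inner_map_map, ← huv, inner_add_right,
    add_sub_cancel_right, Submodule.inner_left_of_mem_orthogonal hu hg]

theorem inner_map_left_apply (h : IsUnitaryCoupling U T V J W) {k : L} {c : ℂ}
    (hk : (U p).symm k - c • k ∈ Hᗮ) {s : K} (hs : s ∈ extendedSpace J H) :
    ⟪J k, V p s⟫_ℂ = conj c * ⟪J k, s⟫_ℂ := by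
  refine inner_apply_of_symm_sub_smul_mem_orthogonal (S := extendedSpace J H) ?_ hs
  refine Submodule.le_orthogonal_orthogonal _ ⟨_, hk, ?_⟩
  rw [J.coe_toLinearMap, map_sub, map_smul, h.symm.map_left]

theorem inner_map_right_left (h : IsUnitaryCoupling U T V J W) {k f : L} {c : ℂ}
    (hk : ⟪k, T f⟫_ℂ = conj c * ⟪k, f⟫_ℂ) : ⟪W f, J k - c • W k⟫_ℂ = 0 := by
  rw [inner_eq_zero_symm, inner_sub_left, inner_smul_left, h.inner_left_right, W.inner_map_map,
    hk, sub_self]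

theorem inner_map_left_sub_smul_apply (h : IsUnitaryCoupling U T V J W) {S : Submodule ℂ K}
    (hSH : S ≤ extendedSpace J H) (hWS : H.map W.toLinearMap ⟂ S) (hVS : MapsTo (V p) S S) {k : L}
    {c : ℂ} (φ : ℂ) (hkH : k ∈ H) (hk : (U p).symm k - c • k ∈ Hᗮ) {s : K} (hs : s ∈ S) :
    ⟪J k - φ • W k, V p s⟫_ℂ = conj c * ⟪J k - φ • W k, s⟫_ℂ := by
  have inner_eq {t : K} (ht : t ∈ S) : ⟪J k - φ • W k, t⟫_ℂ = ⟪J k, t⟫_ℂ := by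
    have hWt : ⟪W k, t⟫_ℂ = 0 :=
      Submodule.isOrtho_iff_inner_eq.1 hWS _ (Submodule.mem_map_of_mem hkH) t ht
    rw [inner_sub_left, inner_smul_left, hWt, mul_zero, sub_zero]
  rw [inner_eq (hVS hs), inner_eq hs, h.inner_map_left_apply hk (hSH hs)]

theorem inner_map_left_sub_smul (h : IsUnitaryCoupling U T V J W) {k g : L} {φ ψ : ℂ}
    (hk : ⟪k, T g⟫_ℂ = conj φ * ⟪k, g⟫_ℂ) (hg : ⟪g, T k⟫_ℂ = conj ψ * ⟪g, k⟫_ℂ) :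
    ⟪J k - φ • W k, J g - ψ • W g⟫_ℂ = (1 - conj φ * ψ) * ⟪k, g⟫_ℂ := by
  rw [inner_sub_left, inner_smul_left, h.inner_map_right_left hg, mul_zero, sub_zero,
    inner_sub_right, inner_smul_right, h.inner_left_right, J.inner_map_map, hk]
  ring

theorem map_left_sub_smul_mem (h : IsUnitaryCoupling U T V J W) (hTH : MapsTo T H H) {k : L} {φ : ℂ}
    (hk : k ∈ H) (hφ : ∀ f ∈ H, ⟪k, T f⟫_ℂ = conj φ * ⟪k, f⟫_ℂ) :
    J k - φ • W k ∈ extendedSpace J H ⊓ (H.map W.toLinearMap)ᗮ := by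
  have hWk : W k ∈ extendedSpace J H :=
    h.map_right_le_extendedSpace hTH (Submodule.mem_map_of_mem hk)
  refine ⟨sub_mem (map_mem_extendedSpace hk) (Submodule.smul_mem _ _ hWk), ?_⟩
  rintro _ ⟨f, hf, rfl⟩
  exact h.inner_map_right_left (hφ f hf)

theorem mapsTo_extendedSpace_inf_orthogonal (h : IsUnitaryCoupling U T V J W)
    (hH : MapsTo (U p) H H)
    (hHE : MapsTo (U p).symm (H ⊔ E : Submodule ℂ L) (H ⊔ E : Submodule ℂ L)) :
    MapsTo (V p) (extendedSpace J H ⊓ (H.map W.toLinearMap ⊔ E.map W.toLinearMap)ᗮ : Submodule ℂ K)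
      (extendedSpace J H ⊓ (H.map W.toLinearMap ⊔ E.map W.toLinearMap)ᗮ : Submodule ℂ K) := by
  rw [← Submodule.map_sup]
  exact (h.mapsTo_extendedSpace hH).inter_inter (mapsTo_orthogonal (h.symm.mapsTo_map_right hHE))

theorem mapsTo_extendedSpace_inf_sup (h : IsUnitaryCoupling U T V J W)
    (hH : MapsTo (U p) H H) (hE : MapsTo (U p) E E) :
    MapsTo (V p) (extendedSpace J H ⊓ (E.map W.toLinearMap ⊔ E.map J.toLinearMap) : Submodule ℂ K)
      (extendedSpace J H ⊓ (E.map W.toLinearMap ⊔ E.map J.toLinearMap) : Submodule ℂ K) := by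
  rintro x ⟨hxP, hx⟩
  refine ⟨h.mapsTo_extendedSpace hH hxP, ?_⟩
  obtain ⟨u, hu, v, hv, rfl⟩ := Submodule.mem_sup.1 hx
  rw [map_add]
  exact Submodule.add_mem_sup (h.mapsTo_map_right hE hu) (h.mapsTo_map_left hE hv)

theorem exists_decomposition [CompleteSpace K] (h : IsUnitaryCoupling U T V J W) (hHE : H ⟂ E)
    (hpH : MapsTo (U p) H H)
    (hpHE : MapsTo (U p).symm (H ⊔ E : Submodule ℂ L) (H ⊔ E : Submodule ℂ L))
    (hqH : MapsTo (U q) H H) (hqE : MapsTo (U q) E E) (hTH : MapsTo T H H)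
    (hTE : MapsTo T E (H ⊔ E : Submodule ℂ L)) {κ : Type*} {k : κ → L} {c₁ c₂ φ : κ → ℂ}
    (hk : ∀ i, k i ∈ H) (hc₁ : ∀ i, (U p).symm (k i) - c₁ i • k i ∈ Hᗮ)
    (hc₂ : ∀ i, (U q).symm (k i) - c₂ i • k i ∈ Hᗮ)
    (hφ : ∀ i, ∀ f ∈ H, ⟪k i, T f⟫_ℂ = conj (φ i) * ⟪k i, f⟫_ℂ) :
    ∃ a b : κ → K, ∀ i j, (1 - conj (c₁ i) * c₁ j) * (1 - conj (c₂ i) * c₂ j) *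
        ((1 - conj (φ i) * φ j) * ⟪k i, k j⟫_ℂ) =
      (1 - conj (c₁ i) * c₁ j) * ⟪a i, a j⟫_ℂ + (1 - conj (c₂ i) * c₂ j) * ⟪b i, b j⟫_ℂ := by
  let P := extendedSpace J H
  let WH := H.map W.toLinearMap
  let WE := E.map W.toLinearMap
  let JE := E.map J.toLinearMap
  let S₁ := P ⊓ (WH ⊔ WE)ᗮ
  let S₂ := (P ⊓ (WE ⊔ JE)).topologicalClosure
  have hP : IsClosed (P : Set K) := Submodule.isClosed_orthogonal _
  have hPJ : P ⟂ JE := isOrtho_extendedSpace_map hHE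
  have hW : WH ⟂ WE := hHE.map W
  have hWH : WH ≤ P := h.map_right_le_extendedSpace hTH
  have hWH₁ : WH ⟂ S₁ :=
    (Submodule.isOrtho_orthogonal_right _).mono le_sup_left inf_le_right
  have hWH₂ : WH ⟂ S₂ := isOrtho_closure_inf_sup hPJ hW hWH
  have hVS₁ : MapsTo (V p) S₁ S₁ := h.mapsTo_extendedSpace_inf_orthogonal hpH hpHE
  have hVS₂ : MapsTo (V q) S₂ S₂ := by
    simpa only [S₂, Submodule.topologicalClosure_coe] using
      (h.mapsTo_extendedSpace_inf_sup hqH hqE).closure (V q).continuous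
  have hS₂ : S₂ ≤ P := Submodule.topologicalClosure_minimal _ inf_le_left hP
  have hd (i : κ) : J (k i) - φ i • W (k i) ∈ S₁ ⊔ S₂ :=
    inf_orthogonal_le_sup_closure hP hPJ hW hWH (h.map_right_le_extendedSpace_sup hTE)
      (h.map_left_sub_smul_mem hTH (hk i) (hφ i))
  obtain ⟨a, b, hab⟩ := exists_decomposition_of_mem_sup (isOrtho_inf_orthogonal_closure hPJ)
    (V₁ := (V p).toLinearIsometry) (V₂ := (V q).toLinearIsometry) hVS₁ hVS₂ hd
    (fun i _ ↦ h.inner_map_left_sub_smul_apply inf_le_left hWH₁ hVS₁ _ (hk i) (hc₁ i))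
    (fun i _ ↦ h.inner_map_left_sub_smul_apply hS₂ hWH₂ hVS₂ _ (hk i) (hc₂ i))
  refine ⟨a, b, fun i j ↦ ?_⟩
  rw [← h.inner_map_left_sub_smul (hφ i _ (hk j)) (hφ j _ (hk i)), hab]

end IsUnitaryCoupling

end Scattering

section AglerDecomposition

/-- An Agler decomposition `1 - conj φ(w) φ(z) = ∑ᵢ (1 - conj wᵢ zᵢ) ⟨aᵢ(w), aᵢ(z)⟩` of a function
`φ` on the bidisk, with the positive kernels presented as Gram kernels of `a` and `b`. -/
def IsAglerDecomposition {K : Type*} [NormedAddCommGroup K] [InnerProductSpace ℂ K] (φ : ℂ × ℂ → ℂ)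
    (a b : Bidisk → K) : Prop :=
  ∀ w z : Bidisk, 1 - conj (φ w) * φ z =
    (1 - conj w.1.1 * z.1.1) * ⟪a w, a z⟫_ℂ + (1 - conj w.1.2 * z.1.2) * ⟪b w, b z⟫_ℂ

variable {L : Type*} [NormedAddCommGroup L] [InnerProductSpace ℂ L] [CompleteSpace L]
  {e : HilbertBasis (ℤ × ℤ) ℂ L} {φ : ℂ × ℂ → ℂ}

theorem mapsTo_shift_of_isUpperSet {A : Set (ℤ × ℤ)} (hA : IsUpperSet A) {a : ℤ × ℤ} (ha : 0 ≤ a) :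
    MapsTo (shift e a) (coordSubspace e A) (coordSubspace e A) :=
  mapsTo_shift fun _ hn ↦ hA (le_add_of_nonneg_right ha) hn

theorem inner_szegoVector_shift_fst {w : ℂ × ℂ} (hw : w ∈ Bidisk) {f : L}
    (hf : f ∈ coordSubspace e (Ici 0)) :
    ⟪szegoVector e w, shift e (1, 0) f⟫_ℂ = conj w.1 * ⟪szegoVector e w, f⟫_ℂ :=
  inner_apply_of_symm_sub_smul_mem_orthogonal (shift_fst_symm_szegoVector_sub_mem hw) hf

theorem inner_szegoVector_shift_snd {w : ℂ × ℂ} (hw : w ∈ Bidisk) {f : L}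
    (hf : f ∈ coordSubspace e (Ici 0)) :
    ⟪szegoVector e w, shift e (0, 1) f⟫_ℂ = conj w.2 * ⟪szegoVector e w, f⟫_ℂ :=
  inner_apply_of_symm_sub_smul_mem_orthogonal (shift_snd_symm_szegoVector_sub_mem hw) hf

theorem coordSubspace_quadrant_sup_eq :
    coordSubspace e (Ici 0) ⊔ coordSubspace e {n : ℤ × ℤ | n.1 < 0 ∧ 0 ≤ n.2} =
      coordSubspace e {n | 0 ≤ n.2} := by
  rw [← coordSubspace_union]
  congr 1
  ext n
  simp only [mem_union, mem_Ici, Prod.le_def, mem_ofPred_eq, Prod.fst_zero, Prod.snd_zero]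
  lia

theorem exists_laurentOperator (e : HilbertBasis (ℤ × ℤ) ℂ L) (hφ : DifferentiableOn ℂ φ Bidisk)
    (hb : ∀ z ∈ Bidisk, ‖φ z‖ ≤ 1) :
    ∃ T : L →L[ℂ] L, ‖T‖ ≤ 1 ∧ (∀ a, Commute (shift e a : L →L[ℂ] L) T) ∧
      (∀ A : Set (ℤ × ℤ), IsUpperSet A → MapsTo T (coordSubspace e A) (coordSubspace e A)) ∧
      ∀ w ∈ Bidisk, ∀ f ∈ coordSubspace e (Ici 0),
        ⟪szegoVector e w, T f⟫_ℂ = conj (φ w) * ⟪szegoVector e w, f⟫_ℂ := by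
  obtain ⟨c, hc, hcφ⟩ := exists_isSchurSeries hφ hb
  obtain ⟨T, hT, hlim⟩ := exists_isRadialLimit hc.conj (commute_shift (e := e) (1, 0) (0, 1))
    (norm_shift_le _) (norm_shift_le _)
  have mapsTo_fst {A : Set (ℤ × ℤ)} (hA : IsUpperSet A) :=
    mapsTo_shift_of_isUpperSet (e := e) hA (a := (1, 0)) (by simp [Prod.le_def])
  have mapsTo_snd {A : Set (ℤ × ℤ)} (hA : IsUpperSet A) :=
    mapsTo_shift_of_isUpperSet (e := e) hA (a := (0, 1)) (by simp [Prod.le_def])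
  refine ⟨T, hT, fun a ↦ (hlim.commute (commute_shift _ _) (commute_shift _ _)).symm,
    fun A hA ↦ ?_, fun w hw f hf ↦ ?_⟩
  · exact hlim.mapsTo hc.conj.norm_coeff_le (norm_shift_le _) (norm_shift_le _)
      isClosed_coordSubspace (mapsTo_fst hA) (mapsTo_snd hA)
  · rw [hcφ w hw, ← doubleSeries_conj]
    exact hlim.inner_apply hc.conj.norm_coeff_le (norm_shift_le _) (norm_shift_le _)
      (mapsTo_fst (isUpperSet_Ici 0)) (mapsTo_snd (isUpperSet_Ici 0))
      (z := (conj w.1, conj w.2)) (by simpa [Bidisk] using hw)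
      (fun _ ↦ inner_szegoVector_shift_fst hw) (fun _ ↦ inner_szegoVector_shift_snd hw) hf

theorem exists_isAglerDecomposition_of_basis (e : HilbertBasis (ℤ × ℤ) ℂ L)
    (hφ : DifferentiableOn ℂ φ Bidisk) (hb : ∀ z ∈ Bidisk, ‖φ z‖ ≤ 1) :
    ∃ a b : Bidisk → WithLp 2 (L × L), IsAglerDecomposition φ a b := by
  obtain ⟨T, hT, hshift, hTA, hTφ⟩ := exists_laurentOperator e hφ hb
  have hshift_star (a : ℤ × ℤ) : Commute (shift e a : L →L[ℂ] L) (star T) := by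
    rw [← commute_star_comm, star_shift]
    exact hshift (-a)
  obtain ⟨V, J, W, hV⟩ := exists_isUnitaryCoupling hT hshift hshift_star
  let H := coordSubspace e (Ici 0)
  let E := coordSubspace e {n | n.1 < 0 ∧ 0 ≤ n.2}
  have hHE : H ⟂ E := isOrtho_coordSubspace <| disjoint_left.2 fun n hn hn' ↦ hn'.1.not_ge hn.1
  have half_plane : H ⊔ E = coordSubspace e {n | 0 ≤ n.2} := coordSubspace_quadrant_sup_eq
  have upper_half_plane : IsUpperSet {n : ℤ × ℤ | 0 ≤ n.2} := fun _ _ h hn ↦ hn.trans h.2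
  have shift_fst_symm : MapsTo (shift e (1, 0)).symm (H ⊔ E : Submodule ℂ L)
      (H ⊔ E : Submodule ℂ L) := by
    rw [half_plane, shift_symm]
    exact mapsTo_shift fun n hn ↦ by simpa using hn
  have shift_snd : MapsTo (shift e (0, 1)) E E :=
    mapsTo_shift fun n hn ↦ ⟨by simpa using hn.1, add_nonneg hn.2 zero_le_one⟩
  have hTE : MapsTo T E (H ⊔ E : Submodule ℂ L) := by
    refine MapsTo.mono_left ?_ (le_sup_right : E ≤ H ⊔ E)
    rw [half_plane]
    exact hTA _ upper_half_plane
  obtain ⟨a, b, hab⟩ := hV.exists_decomposition hHE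
    (mapsTo_shift_of_isUpperSet (isUpperSet_Ici 0) (by simp [Prod.le_def])) shift_fst_symm
    (mapsTo_shift_of_isUpperSet (isUpperSet_Ici 0) (by simp [Prod.le_def])) shift_snd
    (hTA _ (isUpperSet_Ici 0)) hTE
    (k := fun w : Bidisk ↦ szegoVector e w) (c₁ := fun w ↦ w.1.1) (c₂ := fun w ↦ w.1.2)
    (φ := fun w ↦ φ w) (fun w ↦ szegoVector_mem w.2)
    (fun w ↦ shift_fst_symm_szegoVector_sub_mem w.2)
    (fun w ↦ shift_snd_symm_szegoVector_sub_mem w.2) (fun w ↦ hTφ w w.2)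
  refine ⟨a, b, fun w z ↦ ?_⟩
  rw [← hab, mul_left_comm, inner_szegoVector w.2 z.2, mul_one]

theorem exists_isAglerDecomposition (hφ : DifferentiableOn ℂ φ Bidisk)
    (hb : ∀ z ∈ Bidisk, ‖φ z‖ ≤ 1) :
    ∃ (K : Type) (_ : NormedAddCommGroup K) (_ : InnerProductSpace ℂ K) (_ : CompleteSpace K)
      (a b : Bidisk → K), IsAglerDecomposition φ a b :=
  ⟨_, _, _, inferInstance,
    exists_isAglerDecomposition_of_basis ⟨.refl ℂ (lp (fun _ : ℤ × ℤ ↦ ℂ) 2)⟩ hφ hb⟩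

end AglerDecomposition

section IsometricExtension

theorem hasSum_norm_sq_lp {ι E : Type*} [NormedAddCommGroup E] (g : lp (fun _ : ι ↦ E) 2) :
    HasSum (fun i ↦ ‖g i‖ ^ 2) (‖g‖ ^ 2) := by
  simpa using lp.hasSum_norm (p := 2) (by norm_num) g

variable {ι E F G : Type*} [NormedAddCommGroup E] [InnerProductSpace ℂ E]
  [NormedAddCommGroup F] [InnerProductSpace ℂ F] [NormedAddCommGroup G] [InnerProductSpace ℂ G]

theorem norm_linearCombination_eq_of_inner_eq {α : ι → E} {β : ι → F}
    (h : ∀ i j, ⟪α i, α j⟫_ℂ = ⟪β i, β j⟫_ℂ) (x : ι →₀ ℂ) :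
    ‖Finsupp.linearCombination ℂ β x‖ = ‖Finsupp.linearCombination ℂ α x‖ := by
  have inner_self : ⟪Finsupp.linearCombination ℂ β x, Finsupp.linearCombination ℂ β x⟫_ℂ =
      ⟪Finsupp.linearCombination ℂ α x, Finsupp.linearCombination ℂ α x⟫_ℂ := by
    simp only [Finsupp.linearCombination_apply, Finsupp.sum, sum_inner, inner_sum, inner_smul_left,
      inner_smul_right, h]
  rw [norm_eq_sqrt_re_inner (𝕜 := ℂ), inner_self, ← norm_eq_sqrt_re_inner]

theorem exists_linearIsometry_of_inner_eq [CompleteSpace F] {α : ι → E} {β : ι → F}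
    (h : ∀ i j, ⟪α i, α j⟫_ℂ = ⟪β i, β j⟫_ℂ) :
    ∃ (S : Submodule ℂ E) (T : S →ₗᵢ[ℂ] F), IsClosed (S : Set E) ∧
      ∀ i, ∃ hi : α i ∈ S, T ⟨α i, hi⟩ = β i := by
  let combα := Finsupp.linearCombination ℂ α
  let combβ := Finsupp.linearCombination ℂ β
  let S := (LinearMap.range combα).topologicalClosure
  let e : (ι →₀ ℂ) →ₗ[ℂ] S := combα.codRestrict S fun x ↦
    Submodule.le_topologicalClosure _ (LinearMap.mem_range_self combα x)
  have dense : DenseRange e := by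
    rw [DenseRange, Topology.IsInducing.subtypeVal.dense_iff, ← range_comp]
    exact fun y ↦ y.2
  have bounded : ∃ C : ℝ, ∀ x, ‖combβ x‖ ≤ C * ‖e x‖ :=
    ⟨1, fun x ↦ (norm_linearCombination_eq_of_inner_eq h x).le.trans_eq (one_mul _).symm⟩
  let T : S →L[ℂ] F := combβ.extendOfNorm e
  have T_apply (x : ι →₀ ℂ) : T (e x) = combβ x := LinearMap.extendOfNorm_eq dense bounded x
  have norm_T (y : S) : ‖T y‖ = ‖y‖ :=
    dense.induction_on (p := fun y ↦ ‖T y‖ = ‖y‖) y (isClosed_eq (by fun_prop) (by fun_prop))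
      fun x ↦ by rw [T_apply]; exact norm_linearCombination_eq_of_inner_eq h x
  refine ⟨S, ⟨T, norm_T⟩, Submodule.isClosed_topologicalClosure _, fun i ↦ ?_⟩
  have e_single : (e (Finsupp.single i 1) : E) = α i :=
    (Finsupp.linearCombination_single ℂ 1 i).trans (one_smul ℂ _)
  have mem : α i ∈ S := e_single ▸ (e (Finsupp.single i 1)).2
  refine ⟨mem, ?_⟩
  calc T ⟨α i, mem⟩ = T (e (Finsupp.single i 1)) := congrArg T (Subtype.ext e_single.symm)
    _ = combβ (Finsupp.single i 1) := T_apply _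
    _ = β i := (Finsupp.linearCombination_single ℂ 1 i).trans (one_smul ℂ _)

theorem nonempty_linearIsometry_prod_lp :
    Nonempty (WithLp 2 (E × lp (fun _ : ℕ ↦ E) 2) →ₗᵢ[ℂ] lp (fun _ : ℕ ↦ E) 2) := by
  let cons (x : WithLp 2 (E × lp (fun _ : ℕ ↦ E) 2)) (n : ℕ) : E := Nat.casesOn n x.fst x.snd
  have hasSum_cons (x) : HasSum (fun n ↦ ‖cons x n‖ ^ 2) (‖x‖ ^ 2) := by
    rw [WithLp.prod_norm_sq_eq_of_L2, ← hasSum_nat_add_iff' 1]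
    simpa [cons] using hasSum_norm_sq_lp x.snd
  have memℓp_cons (x) : Memℓp (cons x) 2 :=
    memℓp_gen (by simpa using (hasSum_cons x).summable)
  let F : WithLp 2 (E × lp (fun _ : ℕ ↦ E) 2) →ₗ[ℂ] lp (fun _ : ℕ ↦ E) 2 :=
    { toFun x := ⟨cons x, memℓp_cons x⟩
      map_add' x y := lp.ext <| funext fun n ↦ by cases n <;> rfl
      map_smul' c x := lp.ext <| funext fun n ↦ by cases n <;> rfl }
  refine ⟨F, fun x ↦ (sq_eq_sq₀ (norm_nonneg _) (norm_nonneg _)).1 ?_⟩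
  exact (hasSum_norm_sq_lp (F x)).unique (hasSum_cons x)

theorem exists_linearIsometry_extending {S : Submodule ℂ E} [S.HasOrthogonalProjection]
    (T : S →ₗᵢ[ℂ] F) (R : WithLp 2 (E × G) →ₗᵢ[ℂ] G) :
    ∃ V : WithLp 2 (E × G) →ₗᵢ[ℂ] WithLp 2 (F × G),
      ∀ x : S, V (WithLp.toLp 2 (x, 0)) = WithLp.toLp 2 (T x, 0) := by
  let rest : WithLp 2 (E × G) →ₗ[ℂ] WithLp 2 (E × G) :=
    (WithLp.linearEquiv 2 ℂ (E × G)).symm ∘ₗ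
      ((Sᗮ.starProjection : E →ₗ[ℂ] E) ∘ₗ (WithLp.fstL 2 ℂ E G)).prod
        (WithLp.sndL 2 ℂ E G : WithLp 2 (E × G) →ₗ[ℂ] G)
  let V : WithLp 2 (E × G) →ₗ[ℂ] WithLp 2 (F × G) :=
    (WithLp.linearEquiv 2 ℂ (F × G)).symm ∘ₗ
      (T.toLinearMap ∘ₗ (S.orthogonalProjectionOnto : E →ₗ[ℂ] S) ∘ₗ (WithLp.fstL 2 ℂ E G)).prod
        (R.toLinearMap ∘ₗ rest)
  have norm_V (x : WithLp 2 (E × G)) : ‖V x‖ = ‖x‖ := by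
    refine (sq_eq_sq₀ (norm_nonneg _) (norm_nonneg _)).1 ?_
    calc ‖V x‖ ^ 2 = ‖T (S.orthogonalProjectionOnto x.fst)‖ ^ 2 + ‖R (rest x)‖ ^ 2 :=
          WithLp.prod_norm_sq_eq_of_L2 _
      _ = ‖S.orthogonalProjectionOnto x.fst‖ ^ 2 +
          (‖Sᗮ.starProjection x.fst‖ ^ 2 + ‖x.snd‖ ^ 2) := by
        rw [T.norm_map, R.norm_map, WithLp.prod_norm_sq_eq_of_L2]
        rfl
      _ = ‖x‖ ^ 2 := by
        rw [← add_assoc, WithLp.prod_norm_sq_eq_of_L2,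
          S.norm_sq_eq_add_norm_sq_starProjection x.fst]
        rfl
  refine ⟨⟨V, norm_V⟩, fun x ↦ ?_⟩
  have rest_eq : rest (WithLp.toLp 2 (x, 0)) = 0 := by
    simp [rest]
  change WithLp.toLp 2 (T (S.orthogonalProjectionOnto x), R (rest _)) = _
  rw [rest_eq, map_zero, Submodule.orthogonalProjectionOnto_mem_subspace_eq_self]

theorem exists_linearIsometry_prod_lp_of_inner_eq [CompleteSpace E] {α β : ι → E}
    (h : ∀ i j, ⟪α i, α j⟫_ℂ = ⟪β i, β j⟫_ℂ) :
    ∃ V : WithLp 2 (E × lp (fun _ : ℕ ↦ E) 2) →ₗᵢ[ℂ] WithLp 2 (E × lp (fun _ : ℕ ↦ E) 2),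
      ∀ i, V (WithLp.toLp 2 (α i, 0)) = WithLp.toLp 2 (β i, 0) := by
  obtain ⟨S, T, hS, hT⟩ := exists_linearIsometry_of_inner_eq h
  obtain ⟨R⟩ := nonempty_linearIsometry_prod_lp (E := E)
  have : CompleteSpace S := hS.completeSpace_coe
  obtain ⟨V, hV⟩ := exists_linearIsometry_extending T R
  refine ⟨V, fun i ↦ ?_⟩
  obtain ⟨hi, hTi⟩ := hT i
  rw [← hTi]
  exact hV ⟨α i, hi⟩

end IsometricExtension

section Realization

section Colligation

variable {H : Type*} [NormedAddCommGroup H] [InnerProductSpace ℂ H] {A : ℂ} {B : H →L[ℂ] ℂ} {C : H}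
  {D E : H →L[ℂ] H}

/-- The block operator `(c, h) ↦ (A c + B h, c C + D h)` on `ℂ ⊕ H` is isometric. -/
def IsIsometricColligation (A : ℂ) (B : H →L[ℂ] ℂ) (C : H) (D : H →L[ℂ] H) : Prop :=
  ∀ (c : ℂ) (h : H), ‖A * c + B h‖ ^ 2 + ‖c • C + D h‖ ^ 2 = ‖c‖ ^ 2 + ‖h‖ ^ 2

/-- The transfer function `A + B E (1 - D E)⁻¹ C` of the colligation `(A, B, C, D)`, as a function
of the operator `E`. It is only meaningful when `1 - D E` is invertible, since `Ring.inverse`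
vanishes on non-units. -/
noncomputable def transferFunction (A : ℂ) (B : H →L[ℂ] ℂ) (C : H) (D E : H →L[ℂ] H) : ℂ :=
  A + B (E (Ring.inverse (1 - D.comp E) C))

theorem apply_ringInverse_one_sub_comp (h : IsUnit (1 - D.comp E)) (y : H) :
    y + D (E (Ring.inverse (1 - D.comp E) y)) = Ring.inverse (1 - D.comp E) y := by
  have := congrArg (fun T : H →L[ℂ] H ↦ T y) (Ring.mul_inverse_cancel _ h)
  exact (sub_eq_iff_eq_add.1 this).symm

theorem transferFunction_eq_of_apply_eq (h : IsUnit (1 - D.comp E)) {x : H} {y : ℂ}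
    (hy : A + B (E x) = y) (hx : C + D (E x) = x) : transferFunction A B C D E = y := by
  have inverse_C : Ring.inverse (1 - D.comp E) C = x := by
    have := congrArg (fun T : H →L[ℂ] H ↦ T x) (Ring.inverse_mul_cancel _ h)
    rwa [← (sub_eq_iff_eq_add.2 hx.symm : x - D (E x) = C)]
  rw [transferFunction, inverse_C, hy]

theorem differentiableAt_transferFunction [CompleteSpace H] (h : IsUnit (1 - D.comp E)) :
    DifferentiableAt ℂ (transferFunction A B C D) E := by
  have pencil : DifferentiableAt ℂ (fun E : H →L[ℂ] H ↦ 1 - D.comp E) E :=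
    (differentiableAt_const 1).sub ((differentiableAt_const D).clm_comp differentiableAt_id)
  have resolvent : DifferentiableAt ℂ (fun E : H →L[ℂ] H ↦ Ring.inverse (1 - D.comp E)) E :=
    (differentiableAt_inverse h).comp (g := Ring.inverse) E pencil
  exact (differentiableAt_const A).add <| B.differentiableAt.comp E <|
    differentiableAt_id.clm_apply <| resolvent.clm_apply (differentiableAt_const C)

namespace IsIsometricColligation

theorem norm_le_one (hV : IsIsometricColligation A B C D) : ‖D‖ ≤ 1 :=
  D.opNorm_le_bound zero_le_one fun h ↦ by
    have := hV 0 h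
    simp only [mul_zero, zero_add, zero_smul, norm_zero] at this
    rw [one_mul, ← sq_le_sq₀ (norm_nonneg _) (norm_nonneg _)]
    nlinarith [sq_nonneg ‖B h‖]

theorem isUnit_one_sub_comp [CompleteSpace H] (hV : IsIsometricColligation A B C D)
    (hE : ‖E‖ < 1) : IsUnit (1 - D.comp E) :=
  isUnit_one_sub_of_norm_lt_one <| calc ‖D.comp E‖ ≤ ‖D‖ * ‖E‖ := D.opNorm_comp_le E
    _ ≤ ‖E‖ := mul_le_of_le_one_left (norm_nonneg E) hV.norm_le_one
    _ < 1 := hE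

theorem differentiableOn_transferFunction_comp [CompleteSpace H] {X : Type*} [NormedAddCommGroup X]
    [NormedSpace ℂ X] {E : X → H →L[ℂ] H} {s : Set X} (hV : IsIsometricColligation A B C D)
    (hE : Differentiable ℂ E) (norm_lt : ∀ z ∈ s, ‖E z‖ < 1) :
    DifferentiableOn ℂ (fun z ↦ transferFunction A B C D (E z)) s := fun z hz ↦
  ((differentiableAt_transferFunction (hV.isUnit_one_sub_comp (norm_lt z hz))).comp z
    (hE z)).differentiableWithinAt

theorem norm_transferFunction_le_one (hV : IsIsometricColligation A B C D) (hE : ‖E‖ ≤ 1)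
    (h : IsUnit (1 - D.comp E)) : ‖transferFunction A B C D E‖ ≤ 1 := by
  let x := Ring.inverse (1 - D.comp E) C
  have energy : ‖transferFunction A B C D E‖ ^ 2 + ‖x‖ ^ 2 = 1 + ‖E x‖ ^ 2 := by
    have := hV 1 (E x)
    rwa [mul_one, one_smul, apply_ringInverse_one_sub_comp h, norm_one, one_pow] at this
  have norm_E : ‖E x‖ ^ 2 ≤ ‖x‖ ^ 2 :=
    pow_le_pow_left₀ (norm_nonneg _) (by simpa using E.le_of_opNorm_le hE x) 2
  exact (sq_le_one_iff₀ (norm_nonneg _)).1 (by linarith)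

end IsIsometricColligation

theorem exists_isIsometricColligation (V : WithLp 2 (ℂ × H) →ₗᵢ[ℂ] WithLp 2 (ℂ × H)) :
    ∃ A B C D, IsIsometricColligation (H := H) A B C D ∧ ∀ c h,
      V (WithLp.toLp 2 (c, h)) = WithLp.toLp 2 (A * c + B h, c • C + D h) := by
  let V' : ℂ × H →L[ℂ] WithLp 2 (ℂ × H) := V.toContinuousLinearMap.comp
    (WithLp.prodContinuousLinearEquiv 2 ℂ ℂ H).symm.toContinuousLinearMap
  let inr := ContinuousLinearMap.inr ℂ ℂ H
  have blocks (c : ℂ) (h : H) : V (WithLp.toLp 2 (c, h)) = WithLp.toLp 2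
      ((V' (1, 0)).fst * c + (V' (inr h)).fst, c • (V' (1, 0)).snd + (V' (inr h)).snd) := by
    have split : (c, h) = c • ((1, 0) : ℂ × H) + inr h := by simp [inr]
    change V' (c, h) = _
    rw [split, map_add, map_smul, mul_comm]
    rfl
  refine ⟨(V' (1, 0)).fst, (WithLp.fstL 2 ℂ ℂ H).comp (V'.comp inr), (V' (1, 0)).snd,
    (WithLp.sndL 2 ℂ ℂ H).comp (V'.comp inr), fun c h ↦ ?_, blocks⟩
  have := V.norm_map (WithLp.toLp 2 (c, h))
  rw [blocks, ← sq_eq_sq₀ (norm_nonneg _) (norm_nonneg _), WithLp.prod_norm_sq_eq_of_L2,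
    WithLp.prod_norm_sq_eq_of_L2] at this
  exact this

end Colligation

variable {H₁ H₂ : Type*} [NormedAddCommGroup H₁] [InnerProductSpace ℂ H₁] [NormedAddCommGroup H₂]
  [InnerProductSpace ℂ H₂]

theorem diagBlockOp_toLp (a b : ℂ) (x : H₁) (y : H₂) :
    diagBlockOp H₁ H₂ a b (WithLp.toLp 2 (x, y)) = WithLp.toLp 2 (a • x, b • y) :=
  rfl

theorem norm_diagBlockOp_le (a b : ℂ) : ‖diagBlockOp H₁ H₂ a b‖ ≤ max ‖a‖ ‖b‖ := by
  let m := max ‖a‖ ‖b‖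
  refine ContinuousLinearMap.opNorm_le_bound _ (by positivity) fun x ↦ ?_
  have norm_sq_smul_le {c : ℂ} (hc : ‖c‖ ≤ m) (t : ℝ) : (‖c‖ * t) ^ 2 ≤ m ^ 2 * t ^ 2 := by
    rw [mul_pow]
    gcongr
  rw [← sq_le_sq₀ (norm_nonneg _) (by positivity)]
  calc ‖diagBlockOp H₁ H₂ a b x‖ ^ 2 = (‖a‖ * ‖x.fst‖) ^ 2 + (‖b‖ * ‖x.snd‖) ^ 2 := by
        rw [WithLp.prod_norm_sq_eq_of_L2, ← norm_smul, ← norm_smul]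
        rfl
    _ ≤ m ^ 2 * ‖x.fst‖ ^ 2 + m ^ 2 * ‖x.snd‖ ^ 2 :=
        add_le_add (norm_sq_smul_le (le_max_left _ _) _) (norm_sq_smul_le (le_max_right _ _) _)
    _ = (m * ‖x‖) ^ 2 := by rw [mul_pow, WithLp.prod_norm_sq_eq_of_L2, mul_add]

theorem norm_diagBlockOp_lt_one {z : ℂ × ℂ} (hz : z ∈ Bidisk) : ‖diagBlockOp H₁ H₂ z.1 z.2‖ < 1 :=
  (norm_diagBlockOp_le _ _).trans_lt (max_lt hz.1 hz.2)

theorem differentiable_smul_add_smul {X : Type*} [NormedAddCommGroup X] [NormedSpace ℂ X]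
    (x y : X) :
    Differentiable ℂ fun z : ℂ × ℂ ↦ z.1 • x + z.2 • y := by
  fun_prop

theorem differentiable_diagBlockOp :
    Differentiable ℂ fun z : ℂ × ℂ ↦ diagBlockOp H₁ H₂ z.1 z.2 := by
  have linear (z : ℂ × ℂ) : diagBlockOp H₁ H₂ z.1 z.2 =
      z.1 • diagBlockOp H₁ H₂ 1 0 + z.2 • diagBlockOp H₁ H₂ 0 1 :=
    ContinuousLinearMap.ext fun x ↦ WithLp.ofLp_injective 2 <| Prod.ext
      (by simp [diagBlockOp]) (by simp [diagBlockOp])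
  simp_rw [linear]
  exact differentiable_smul_add_smul (diagBlockOp H₁ H₂ 1 0) (diagBlockOp H₁ H₂ 0 1)

theorem IsAglerDecomposition.exists_linearIsometry {K : Type} [NormedAddCommGroup K]
    [InnerProductSpace ℂ K] [CompleteSpace K] {φ : ℂ × ℂ → ℂ} {a b : Bidisk → K}
    (h : IsAglerDecomposition φ a b) :
    ∃ (G : Type) (_ : NormedAddCommGroup G) (_ : InnerProductSpace ℂ G) (_ : CompleteSpace G)
      (V : WithLp 2 (ℂ × WithLp 2 (WithLp 2 (G × K) × K)) →ₗᵢ[ℂ]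
        WithLp 2 (ℂ × WithLp 2 (WithLp 2 (G × K) × K))),
      ∀ z : Bidisk, V (.toLp 2 (1, .toLp 2 (.toLp 2 (0, z.1.1 • a z), z.1.2 • b z))) =
        .toLp 2 (φ z, .toLp 2 (.toLp 2 (0, a z), b z)) := by
  let α (z : Bidisk) : WithLp 2 (ℂ × WithLp 2 (K × K)) :=
    .toLp 2 (1, .toLp 2 (z.1.1 • a z, z.1.2 • b z))
  let β (z : Bidisk) : WithLp 2 (ℂ × WithLp 2 (K × K)) := .toLp 2 (φ z, .toLp 2 (a z, b z))
  have gram (w z : Bidisk) : ⟪α w, α z⟫_ℂ = ⟪β w, β z⟫_ℂ := by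
    simp only [α, β, WithLp.prod_inner_apply, inner_smul_left, inner_smul_right]
    simp only [RCLike.inner_apply, map_one, mul_one]
    linear_combination h w z
  obtain ⟨V, hV⟩ := exists_linearIsometry_prod_lp_of_inner_eq gram
  let G := lp (fun _ : ℕ ↦ WithLp 2 (ℂ × WithLp 2 (K × K))) 2
  let R : WithLp 2 (WithLp 2 (ℂ × WithLp 2 (K × K)) × G) ≃ₗᵢ[ℂ]
      WithLp 2 (ℂ × WithLp 2 (WithLp 2 (G × K) × K)) :=
    (LinearIsometryEquiv.withLpProdAssoc 2 ℂ ℂ (WithLp 2 (K × K)) G).trans <|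
      .withLpProdCongr 2 (.refl ℂ ℂ) <|
        (LinearIsometryEquiv.withLpProdComm 2 ℂ (WithLp 2 (K × K)) G).trans
          (LinearIsometryEquiv.withLpProdAssoc 2 ℂ G K K).symm
  exact ⟨G, inferInstance, inferInstance, inferInstance,
    R.toLinearIsometry.comp (V.comp R.symm.toLinearIsometry), fun z ↦ congrArg R (hV z)⟩

theorem IsAglerDecomposition.exists_realization {K : Type} [NormedAddCommGroup K]
    [InnerProductSpace ℂ K] [CompleteSpace K] {φ : ℂ × ℂ → ℂ} {a b : Bidisk → K}
    (h : IsAglerDecomposition φ a b) :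
    ∃ (H₁ H₂ : Type) (_ : NormedAddCommGroup H₁) (_ : InnerProductSpace ℂ H₁)
      (_ : CompleteSpace H₁) (_ : NormedAddCommGroup H₂) (_ : InnerProductSpace ℂ H₂)
      (_ : CompleteSpace H₂) (A : ℂ) (B : WithLp 2 (H₁ × H₂) →L[ℂ] ℂ) (C : WithLp 2 (H₁ × H₂))
      (D : WithLp 2 (H₁ × H₂) →L[ℂ] WithLp 2 (H₁ × H₂)), IsIsometricColligation A B C D ∧
        ∀ z ∈ Bidisk, φ z = transferFunction A B C D (diagBlockOp H₁ H₂ z.1 z.2) := by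
  obtain ⟨G, _, _, _, V, hV⟩ := h.exists_linearIsometry
  obtain ⟨A, B, C, D, hiso, blocks⟩ := exists_isIsometricColligation V
  refine ⟨WithLp 2 (G × K), K, _, _, inferInstance, _, _, inferInstance, A, B, C, D, hiso,
    fun z hz ↦ ?_⟩
  let x : WithLp 2 (WithLp 2 (G × K) × K) := .toLp 2 (.toLp 2 (0, a ⟨z, hz⟩), b ⟨z, hz⟩)
  let E := diagBlockOp (WithLp 2 (G × K)) K z.1 z.2
  have E_x : E x = .toLp 2 (.toLp 2 (0, z.1 • a ⟨z, hz⟩), z.2 • b ⟨z, hz⟩) := by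
    simp only [E, x, diagBlockOp_toLp, ← WithLp.toLp_smul, Prod.smul_mk, smul_zero]
  have V_x : WithLp.toLp 2 (A * 1 + B (E x), (1 : ℂ) • C + D (E x)) = .toLp 2 (φ z, x) := by
    rw [← blocks, E_x]
    exact hV ⟨z, hz⟩
  rw [mul_one, one_smul] at V_x
  exact (transferFunction_eq_of_apply_eq
    (hiso.isUnit_one_sub_comp (norm_diagBlockOp_lt_one hz))
    (congrArg WithLp.fst V_x) (congrArg WithLp.snd V_x)).symm

end Realization

/-- **Realization formula on the bidisk (Agler).** A function `φ : 𝔻² → ℂ` is analytic with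
`sup_{λ∈𝔻²} |φ(λ)| ≤ 1` if and only if there are complex Hilbert spaces `H₁, H₂` and an
isometry `V : ℂ ⊕ H → ℂ ⊕ H` of `H = H₁ ⊕ H₂`, with block decomposition
`V(c,h) = (A c + B h, c • C + D h)`, such that, with `E_λ = λ¹ I_{H₁} ⊕ λ² I_{H₂}`, for
every `λ ∈ 𝔻²` the operator `I_H - D E_λ` is invertible and
`φ(λ) = A + B E_λ (I_H - D E_λ)⁻¹ C`. -/
theorem realization_formula_bidisk (φ : ℂ × ℂ → ℂ) :
    (DifferentiableOn ℂ φ Bidisk ∧ ∀ lam ∈ Bidisk, ‖φ lam‖ ≤ 1) ↔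
    ∃ (H₁ H₂ : Type) (_ : NormedAddCommGroup H₁) (_ : InnerProductSpace ℂ H₁)
      (_ : CompleteSpace H₁) (_ : NormedAddCommGroup H₂) (_ : InnerProductSpace ℂ H₂)
      (_ : CompleteSpace H₂)
      (A : ℂ) (B : WithLp 2 (H₁ × H₂) →L[ℂ] ℂ) (C : WithLp 2 (H₁ × H₂))
      (D : WithLp 2 (H₁ × H₂) →L[ℂ] WithLp 2 (H₁ × H₂)),
      -- `V(c, h) = (A * c + B h, c • C + D h)` is an isometry of `ℂ ⊕ H₁ ⊕ H₂`
      (∀ (c : ℂ) (h : WithLp 2 (H₁ × H₂)),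
        ‖A * c + B h‖ ^ 2 + ‖c • C + D h‖ ^ 2 = ‖c‖ ^ 2 + ‖h‖ ^ 2) ∧
      ∀ lam ∈ Bidisk,
        IsUnit (1 - D.comp (diagBlockOp H₁ H₂ lam.1 lam.2)) ∧
        φ lam = A + B ((diagBlockOp H₁ H₂ lam.1 lam.2)
          ((Ring.inverse (1 - D.comp (diagBlockOp H₁ H₂ lam.1 lam.2))) C)) := by
  constructor
  · rintro ⟨hφ, hb⟩
    obtain ⟨K, _, _, _, a, b, hab⟩ := exists_isAglerDecomposition hφ hb
    obtain ⟨H₁, H₂, _, _, _, _, _, _, A, B, C, D, hV, hABCD⟩ := hab.exists_realization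
    exact ⟨H₁, H₂, _, _, inferInstance, _, _, inferInstance, A, B, C, D, hV, fun z hz ↦
      ⟨hV.isUnit_one_sub_comp (norm_diagBlockOp_lt_one hz), hABCD z hz⟩⟩
  · rintro ⟨H₁, H₂, _, _, _, _, _, _, A, B, C, D, hV, hφ⟩
    have hV : IsIsometricColligation A B C D := hV
    have diagBlockOp_lt : ∀ z ∈ Bidisk, ‖diagBlockOp H₁ H₂ z.1 z.2‖ < 1 := fun _ ↦
      norm_diagBlockOp_lt_one
    refine ⟨(hV.differentiableOn_transferFunction_comp differentiable_diagBlockOp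
      diagBlockOp_lt).congr fun z hz ↦ (hφ z hz).2, fun z hz ↦ ?_⟩
    rw [(hφ z hz).2]
    exact hV.norm_transferFunction_le_one (diagBlockOp_lt z hz).le (hφ z hz).1
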